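/- Let N ≥ 2 and let p satisfy 2 < p < 2N/(N−2) if N ≥ 3, and 2 < p < ∞ if N = 2. Let f : [0,∞) → ℝ be continuously differentiable and nondecreasing with f(0) = 0 and f'(0) = 0, and suppose there exist C > 0 with |f(s)| ≤ C·s^{p−1} for all s ≥ 0, and R₀ > 0, μ > 2 with f(s)·s ≥ μ·F(s) for all s ≥ R₀, where F(s) = ∫₀^s f(t) dt. Suppose λ₂ > 1 is a real number such that there exists a nonzero function v : [0,1] → ℝ, continuously differentiable on [0,1] and twice differentiable on (0,1), with v'(0) = v'(1) = 0 and −v''(r) − ((N−1)/r)·v'(r) + v(r) = λ₂·v(r) on (0,1), and no such nonzero function exists for any λ ∈ (1, λ₂); and suppose there exists u₀ > 0 with f(u₀) = u₀ and f'(u₀) > λ₂. Then there exist two functions u₁, u₂ : [0,1] → ℝ, each continuously differentiable on [0,1], twice differentiable on (0,1), with u_i'(0) = u_i'(1) = 0, u_i(r) > 0 for all r, u_i nonconstant, solving −u_i''(r) − ((N−1)/r)·u_i'(r) + u_i(r) = f(u_i(r)) on (0,1), such that u₁ is nondecreasing and u₂ is nonincreasing. -/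

import Mathlib

open Set

/-- `lam` is a radial Neumann eigenvalue of `-Δ + 1` on the unit ball of `ℝ^N`:
there is a nonzero radial eigenfunction `v` with `v'(0) = v'(1) = 0` solving
`-v'' - ((N-1)/r) v' + v = lam v` on `(0,1)`. -/
def IsRadialEigenvalue (N : ℕ) (lam : ℝ) : Prop :=
  ∃ v v' v'' : ℝ → ℝ,
    (∀ r ∈ Set.Icc (0:ℝ) 1, HasDerivWithinAt v (v' r) (Set.Icc 0 1) r) ∧
    ContinuousOn v' (Set.Icc 0 1) ∧
    (∀ r ∈ Set.Ioo (0:ℝ) 1, HasDerivAt v' (v'' r) r) ∧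
    v' 0 = 0 ∧ v' 1 = 0 ∧
    (∃ r ∈ Set.Icc (0:ℝ) 1, v r ≠ 0) ∧
    ∀ r ∈ Set.Ioo (0:ℝ) 1,
      -v'' r - ((N : ℝ) - 1) / r * v' r + v r = lam * v r

/-!
Nonnegative radial solutions are the fixed points of the Picard map `T u = (-Δ + 1)⁻¹ f(u)` on
`C([0,1])`. The map `T` is order preserving and, by the maximum principle, preserves the cones of
nondecreasing and of nonincreasing functions. As `f` is nondecreasing, its primitive `F` is convex,
so each step of the iteration lowers the energy by at least half of the squared `H¹`-distance
travelled. An orbit along which the energy is bounded below is therefore asymptotically regular;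
the Ambrosetti–Rabinowitz condition and the subcritical growth then bound it uniformly, and it
subconverges to a fixed point.

Since `f'(u₀)` exceeds a radial eigenvalue, there are monotone perturbations `s + z` of the constant
`u₀` of energy below that of `u₀`, with `s` running over an interval whose endpoints give data below
and above `u₀`. Orbits that fall strictly below `u₀` form an open set of data, and so do those that
rise strictly above it. By connectedness some orbit does neither; its energy is bounded below, hence
it accumulates at a fixed point which meets the value `u₀` and has less energy than the constant
`u₀`. This fixed point is the sought nonconstant monotone solution.
-/

namespace RadialNeumann

open Filter MeasureTheory Topology
open scoped unitInterval

/-! ### Integration against the radial weight -/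

section RadialInt

/-- The integral of a radial function over the unit ball of `ℝ^(n+1)`, up to the area of the unit
sphere. -/
noncomputable def radialInt (n : ℕ) (g : ℝ → ℝ) : ℝ := ∫ r in (0 : ℝ)..1, r ^ n * g r

variable {n : ℕ} {g k : ℝ → ℝ}

lemma intervalIntegrable_pow_mul (hg : ContinuousOn g I) :
    IntervalIntegrable (fun r => r ^ n * g r) volume 0 1 := by
  apply ContinuousOn.intervalIntegrable
  rw [uIcc_of_le zero_le_one]
  fun_prop

lemma radialInt_add (hg : ContinuousOn g I) (hk : ContinuousOn k I) :
    radialInt n (fun r => g r + k r) = radialInt n g + radialInt n k := by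
  simp only [radialInt, mul_add]
  exact intervalIntegral.integral_add (intervalIntegrable_pow_mul hg)
    (intervalIntegrable_pow_mul hk)

lemma radialInt_sub (hg : ContinuousOn g I) (hk : ContinuousOn k I) :
    radialInt n (fun r => g r - k r) = radialInt n g - radialInt n k := by
  simp only [radialInt, mul_sub]
  exact intervalIntegral.integral_sub (intervalIntegrable_pow_mul hg)
    (intervalIntegrable_pow_mul hk)

lemma radialInt_const_mul (c : ℝ) (g : ℝ → ℝ) :
    radialInt n (fun r => c * g r) = c * radialInt n g := by
  simp only [radialInt, mul_left_comm _ c, intervalIntegral.integral_const_mul]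

lemma radialInt_const (c : ℝ) : radialInt n (fun _ => c) = c / (n + 1) := by
  simp [radialInt, integral_pow, div_eq_inv_mul]

lemma radialInt_mono (hg : ContinuousOn g I) (hk : ContinuousOn k I) (h : ∀ r ∈ I, g r ≤ k r) :
    radialInt n g ≤ radialInt n k :=
  intervalIntegral.integral_mono_on zero_le_one (intervalIntegrable_pow_mul hg)
    (intervalIntegrable_pow_mul hk)
    fun r hr => mul_le_mul_of_nonneg_left (h r hr) (pow_nonneg hr.1 n)

lemma abs_radialInt_le {g k : ℝ → ℝ} (hg : ContinuousOn g I) (hk : ContinuousOn k I)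
    (h : ∀ r ∈ I, |g r| ≤ k r) : |radialInt n g| ≤ radialInt n k := by
  rw [abs_le']
  refine ⟨radialInt_mono hg hk fun r hr => (le_abs_self _).trans (h r hr), ?_⟩
  rw [← neg_one_mul, ← radialInt_const_mul]
  exact radialInt_mono (by fun_prop) hk fun r hr => by
    simpa using (neg_le_abs _).trans (h r hr)

lemma radialInt_pow (m : ℕ) : radialInt n (fun r => r ^ m) = 1 / (n + m + 1) := by
  simp [radialInt, ← pow_add, integral_pow]

lemma radialInt_congr (h : ∀ r ∈ I, g r = k r) : radialInt n g = radialInt n k := by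
  refine intervalIntegral.integral_congr fun r hr => ?_
  rw [uIcc_of_le zero_le_one] at hr
  simp only [h r hr]

lemma radialInt_nonneg (h : ∀ r ∈ I, 0 ≤ g r) : 0 ≤ radialInt n g :=
  intervalIntegral.integral_nonneg zero_le_one
    fun r hr => mul_nonneg (pow_nonneg hr.1 n) (h r hr)

lemma eq_zero_of_radialInt_nonpos (hg : ContinuousOn g I) (h : ∀ r ∈ I, 0 ≤ g r)
    (h0 : radialInt n g ≤ 0) : EqOn g 0 I := by
  have heq : EqOn g 0 (Ioo 0 1) := by
    by_contra hne
    obtain ⟨r, hr, hr0⟩ : ∃ r ∈ Ioo (0 : ℝ) 1, g r ≠ 0 := by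
      simpa only [EqOn, Pi.zero_apply, not_forall, exists_prop] using hne
    have hrI := Ioo_subset_Icc_self hr
    have hpos : 0 < radialInt n g :=
      intervalIntegral.integral_pos zero_lt_one (by fun_prop)
        (fun x hx => mul_nonneg (pow_nonneg hx.1.le n) (h x (Ioc_subset_Icc_self hx)))
        ⟨r, hrI, mul_pos (pow_pos hr.1 n) ((h r hrI).lt_of_ne' hr0)⟩
    exact h0.not_gt hpos
  exact heq.of_subset_closure hg continuousOn_const Ioo_subset_Icc_self
    (closure_Ioo zero_ne_one).ge

end RadialInt

/-! ### The radial Neumann problem -/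

/-- `u` is of class `C¹` on `[0,1]` with derivative `v`. -/
structure IsC1On (u v : ℝ → ℝ) : Prop where
  hasDerivWithinAt : ∀ r ∈ I, HasDerivWithinAt u (v r) I r
  continuousOn_deriv : ContinuousOn v I

/-- `u`, with derivative `v`, is a classical solution of `-u'' - (n / r) u' + u = h` on `(0,1)`
with `u'(0) = u'(1) = 0`. The equation is written in divergence form, `(rⁿ u')' = rⁿ (u - h)`. -/
structure IsNeumannSol (n : ℕ) (h u v : ℝ → ℝ) : Prop extends IsC1On u v where
  continuousOn_source : ContinuousOn h I
  hasDerivAt_flux : ∀ r ∈ Ioo (0 : ℝ) 1,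
    HasDerivAt (fun x => x ^ n * v x) (r ^ n * (u r - h r)) r
  deriv_zero : v 0 = 0
  deriv_one : v 1 = 0

namespace IsC1On

variable {u v z w : ℝ → ℝ}

lemma continuousOn (h : IsC1On u v) : ContinuousOn u I :=
  fun r hr => (h.hasDerivWithinAt r hr).continuousWithinAt

lemma hasDerivAt (h : IsC1On u v) {r : ℝ} (hr : r ∈ Ioo (0 : ℝ) 1) : HasDerivAt u (v r) r :=
  (h.hasDerivWithinAt r (Ioo_subset_Icc_self hr)).hasDerivAt (Icc_mem_nhds hr.1 hr.2)

lemma sub (h : IsC1On u v) (k : IsC1On z w) :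
    IsC1On (fun r => u r - z r) (fun r => v r - w r) :=
  ⟨fun r hr => (h.hasDerivWithinAt r hr).sub (k.hasDerivWithinAt r hr),
    h.continuousOn_deriv.sub k.continuousOn_deriv⟩

lemma neg (h : IsC1On u v) : IsC1On (fun r => -u r) (fun r => -v r) :=
  ⟨fun r hr => (h.hasDerivWithinAt r hr).neg, h.continuousOn_deriv.neg⟩

lemma const (c : ℝ) : IsC1On (fun _ => c) (fun _ => 0) :=
  ⟨fun r _ => hasDerivWithinAt_const r _ c, continuousOn_const⟩

lemma monotoneOn (h : IsC1On u v) (hv : ∀ r ∈ Ioo (0 : ℝ) 1, 0 ≤ v r) : MonotoneOn u I := by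
  refine monotoneOn_of_hasDerivWithinAt_nonneg (f' := v) (convex_Icc 0 1) h.continuousOn ?_ ?_ <;>
    rw [interior_Icc]
  exacts [fun r hr => (h.hasDerivAt hr).hasDerivWithinAt, hv]

lemma antitoneOn (h : IsC1On u v) (hv : ∀ r ∈ Ioo (0 : ℝ) 1, v r ≤ 0) : AntitoneOn u I := by
  simpa using (h.neg.monotoneOn fun r hr => neg_nonneg.2 (hv r hr)).neg

end IsC1On

lemma hasDerivAt_sq_min_zero (x : ℝ) :
    HasDerivAt (fun y : ℝ => min y 0 ^ 2) (2 * min x 0) x := by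
  have hbound : ∀ y : ℝ, |min y 0 ^ 2 - min x 0 ^ 2 - (y - x) * (2 * min x 0)| ≤ (y - x) ^ 2 := by
    intro y
    rw [abs_le]
    rcases min_cases x 0 with ⟨hx, hx0⟩ | ⟨hx, hx0⟩ <;>
      rcases min_cases y 0 with ⟨hy, hy0⟩ | ⟨hy, hy0⟩ <;> rw [hx, hy] <;>
      constructor <;> nlinarith
  rw [hasDerivAt_iff_isLittleO]
  refine (Asymptotics.IsBigO.of_bound 1 (.of_forall fun y => ?_)).trans_isLittleO
    (Asymptotics.isLittleO_pow_sub_sub x one_lt_two)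
  simpa [Real.norm_eq_abs] using hbound y

lemma exists_nonpos_and_pos_on_Ico {q : ℝ → ℝ} {a b : ℝ} (hab : a ≤ b)
    (hq : ContinuousOn q (Icc a b)) (hb : q b ≤ 0) :
    ∃ c ∈ Icc a b, q c ≤ 0 ∧ ∀ x ∈ Ico a c, 0 < q x := by
  have hclosed : IsClosed (Icc a b ∩ q ⁻¹' Iic 0) :=
    hq.preimage_isClosed_of_isClosed isClosed_Icc isClosed_Iic
  obtain ⟨c, ⟨hc, hqc⟩, hleast⟩ :=
    (isCompact_Icc.of_isClosed_subset hclosed inter_subset_left).exists_isLeast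
      ⟨b, right_mem_Icc.2 hab, hb⟩
  refine ⟨c, hc, hqc, fun x hx => not_le.1 fun hx0 => ?_⟩
  exact hx.2.not_ge (hleast ⟨⟨hx.1, hx.2.le.trans hc.2⟩, hx0⟩)

namespace IsNeumannSol

variable {n : ℕ} {h k u v z w : ℝ → ℝ}

lemma continuousOn_flux (hs : IsNeumannSol n h u v) : ContinuousOn (fun x => x ^ n * v x) I :=
  (continuousOn_id.pow n).mul hs.continuousOn_deriv

lemma flux_zero (hs : IsNeumannSol n h u v) : (0 : ℝ) ^ n * v 0 = 0 := by
  rw [hs.deriv_zero, mul_zero]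

lemma flux_one (hs : IsNeumannSol n h u v) : (1 : ℝ) ^ n * v 1 = 0 := by
  rw [hs.deriv_one, mul_zero]

lemma sub (hs : IsNeumannSol n h u v) (ks : IsNeumannSol n k z w) :
    IsNeumannSol n (fun r => h r - k r) (fun r => u r - z r) (fun r => v r - w r) where
  toIsC1On := hs.toIsC1On.sub ks.toIsC1On
  continuousOn_source := hs.continuousOn_source.sub ks.continuousOn_source
  hasDerivAt_flux r hr := by
    simpa only [Pi.sub_def, ← mul_sub, sub_sub_sub_comm] using
      (hs.hasDerivAt_flux r hr).sub (ks.hasDerivAt_flux r hr)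
  deriv_zero := by rw [hs.deriv_zero, ks.deriv_zero, sub_zero]
  deriv_one := by rw [hs.deriv_one, ks.deriv_one, sub_zero]

lemma const (n : ℕ) (c : ℝ) : IsNeumannSol n (fun _ => c) (fun _ => c) (fun _ => 0) where
  toIsC1On := .const c
  continuousOn_source := continuousOn_const
  hasDerivAt_flux r _ := by simpa using hasDerivAt_const r (0 : ℝ)
  deriv_zero := rfl
  deriv_one := rfl

lemma neg (hs : IsNeumannSol n h u v) :
    IsNeumannSol n (fun r => -h r) (fun r => -u r) (fun r => -v r) := by
  simpa using (const n 0).sub hs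

lemma radialInt_green (hs : IsNeumannSol n h u v) (hz : IsC1On z w) :
    radialInt n (fun r => v r * w r + u r * z r) = radialInt n (fun r => h r * z r) := by
  have hu := hs.continuousOn
  have hv := hs.continuousOn_deriv
  have hh := hs.continuousOn_source
  have hzc := hz.continuousOn
  have hw := hz.continuousOn_deriv
  have hcont : ContinuousOn (fun r => r ^ n * (v r * w r + u r * z r - h r * z r)) I := by
    fun_prop
  have hparts : radialInt n (fun r => v r * w r + u r * z r - h r * z r)
      = (1 ^ n * v 1) * z 1 - (0 ^ n * v 0) * z 0 := by
    refine intervalIntegral.integral_eq_sub_of_hasDerivAt_of_le zero_le_one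
      (f := fun r => (r ^ n * v r) * z r) (by fun_prop) (fun r hr => ?_)
      (ContinuousOn.intervalIntegrable (by rwa [uIcc_of_le zero_le_one]))
    exact ((hs.hasDerivAt_flux r hr).mul (hz.hasDerivAt hr)).congr_deriv (by ring)
  rw [hs.flux_zero, hs.flux_one, radialInt_sub (by fun_prop) (by fun_prop)] at hparts
  linarith

/-- The weak maximum principle: test the equation with the square of the negative part. -/
lemma nonneg (hs : IsNeumannSol n h u v) (hh : ∀ r ∈ I, 0 ≤ h r) : ∀ r ∈ I, 0 ≤ u r := by
  have hu := hs.continuousOn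
  have hv := hs.continuousOn_deriv
  have hz : IsC1On (fun r => min (u r) 0 ^ 2) (fun r => 2 * min (u r) 0 * v r) :=
    ⟨fun r hr => (hasDerivAt_sq_min_zero (u r)).comp_hasDerivWithinAt r (hs.hasDerivWithinAt r hr),
      by fun_prop⟩
  have hcube : ∀ r, u r * min (u r) 0 ^ 2 = min (u r) 0 ^ 3 := fun r => by
    rcases min_cases (u r) 0 with ⟨h, -⟩ | ⟨h, -⟩ <;> rw [h] <;> ring
  have hmin : ∀ r, min (u r) 0 ≤ 0 := fun r => min_le_right _ _
  have hle : radialInt n (fun r => -min (u r) 0 ^ 3) ≤ 0 :=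
    calc radialInt n (fun r => -min (u r) 0 ^ 3)
        ≤ radialInt n (fun r => (-1) * (v r * (2 * min (u r) 0 * v r) + u r * min (u r) 0 ^ 2)) :=
          radialInt_mono (by fun_prop) (by fun_prop) fun r _ => by
            rw [hcube]; nlinarith [mul_nonneg (neg_nonneg.2 (hmin r)) (sq_nonneg (v r))]
      _ = -radialInt n (fun r => h r * min (u r) 0 ^ 2) := by
          rw [radialInt_const_mul, hs.radialInt_green hz, neg_one_mul]
      _ ≤ 0 := neg_nonpos.2 (radialInt_nonneg fun r hr => mul_nonneg (hh r hr) (sq_nonneg _))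
  have hzero := eq_zero_of_radialInt_nonpos (by fun_prop)
    (fun r _ => neg_nonneg.2 (Odd.pow_nonpos (by decide) (hmin r))) hle
  intro r hr
  have : min (u r) 0 = 0 := by simpa using hzero hr
  exact min_eq_right_iff.1 this

lemma le_of_source_le (hs : IsNeumannSol n h u v) (ks : IsNeumannSol n k z w)
    (hk : ∀ r ∈ I, h r ≤ k r) : ∀ r ∈ I, u r ≤ z r := fun r hr =>
  sub_nonneg.1 ((ks.sub hs).nonneg (fun r hr => sub_nonneg.2 (hk r hr)) r hr)

/-- At a positive maximum `a` of the flux `rⁿ u'` one has `u = h`. As long as the flux stays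
positive beyond `a`, `u - h` increases, hence so does the flux, which then cannot return to its
boundary value `0`. -/
lemma flux_nonpos (hs : IsNeumannSol n h u v) (hh : AntitoneOn h I) :
    ∀ r ∈ I, r ^ n * v r ≤ 0 := by
  obtain ⟨a, ha, hmax⟩ :=
    isCompact_Icc.exists_isMaxOn (nonempty_Icc.2 zero_le_one) hs.continuousOn_flux
  suffices a ^ n * v a ≤ 0 from fun r hr => (hmax hr).trans this
  by_contra! hpos
  have ha01 : a ∈ Ioo (0 : ℝ) 1 := by
    refine ⟨ha.1.lt_of_ne ?_, ha.2.lt_of_ne ?_⟩ <;> rintro rfl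
    exacts [hpos.ne' hs.flux_zero, hpos.ne' hs.flux_one]
  have hua : u a = h a := by
    have hcrit := (hmax.isLocalMax (Icc_mem_nhds ha01.1 ha01.2)).hasDerivAt_eq_zero
      (hs.hasDerivAt_flux a ha01)
    exact sub_eq_zero.1 ((mul_eq_zero.1 hcrit).resolve_left (pow_pos ha01.1 n).ne')
  obtain ⟨b, hb, hqb, hqpos⟩ := exists_nonpos_and_pos_on_Ico ha.2
    (hs.continuousOn_flux.mono (Icc_subset_Icc_left ha.1)) hs.flux_one.le
  have hsub : Icc a b ⊆ I := Icc_subset_Icc ha.1 hb.2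
  have hIoo : Ioo a b ⊆ Ioo 0 1 := Ioo_subset_Ioo ha.1 hb.2
  have hu_mono : MonotoneOn u (Icc a b) := by
    refine monotoneOn_of_hasDerivWithinAt_nonneg (f' := v) (convex_Icc a b)
      (hs.continuousOn.mono hsub) ?_ ?_ <;> rw [interior_Icc]
    · exact fun x hx => (hs.hasDerivAt (hIoo hx)).hasDerivWithinAt
    · exact fun x hx =>
        (pos_of_mul_pos_right (hqpos x ⟨hx.1.le, hx.2⟩) (pow_pos (hIoo hx).1 n).le).le
  have hflux_mono : MonotoneOn (fun x => x ^ n * v x) (Icc a b) := by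
    refine monotoneOn_of_hasDerivWithinAt_nonneg (f' := fun x => x ^ n * (u x - h x))
      (convex_Icc a b) (hs.continuousOn_flux.mono hsub) ?_ ?_ <;> rw [interior_Icc]
    · exact fun x hx => (hs.hasDerivAt_flux x (hIoo hx)).hasDerivWithinAt
    · intro x hx
      have h1 := hu_mono (left_mem_Icc.2 hb.1) (Ioo_subset_Icc_self hx) hx.1.le
      have h2 := hh ha (Ioo_subset_Icc_self (hIoo hx)) hx.1.le
      exact mul_nonneg (pow_pos (hIoo hx).1 n).le (by linarith)
  exact hpos.not_ge ((hflux_mono (left_mem_Icc.2 hb.1) (right_mem_Icc.2 hb.1) hb.1).trans hqb)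

lemma antitoneOn (hs : IsNeumannSol n h u v) (hh : AntitoneOn h I) : AntitoneOn u I :=
  hs.toIsC1On.antitoneOn fun r hr =>
    nonpos_of_mul_nonpos_right (hs.flux_nonpos hh r (Ioo_subset_Icc_self hr)) (pow_pos hr.1 n)

lemma monotoneOn (hs : IsNeumannSol n h u v) (hh : MonotoneOn h I) : MonotoneOn u I := by
  simpa using (hs.neg.antitoneOn hh.neg).neg

end IsNeumannSol

/-! ### The solution operator -/

section Potential

/-- The radial derivative of `radialPotential n g`, namely `r⁻ⁿ ∫₀ʳ sⁿ g(s) ds`; the substitution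
`s = rθ` removes the singularity at `r = 0`. -/
noncomputable def radialPrimitive (n : ℕ) (g : C(ℝ, ℝ)) : C(ℝ, ℝ) where
  toFun r := r * ∫ θ in (0 : ℝ)..1, θ ^ n * g (r * θ)
  continuous_toFun := by
    refine continuous_id.mul
      (intervalIntegral.continuous_parametric_intervalIntegral_of_continuous' ?_ 0 1)
    simp only [Function.uncurry_def]
    fun_prop

/-- The radial solution of `Δu = g` vanishing at the origin. -/
noncomputable def radialPotential (n : ℕ) (g : C(ℝ, ℝ)) : C(ℝ, ℝ) where
  toFun r := ∫ s in (0 : ℝ)..r, radialPrimitive n g s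
  continuous_toFun := intervalIntegral.continuous_primitive
    (fun _ _ => (radialPrimitive n g).continuous.intervalIntegrable _ _) 0

variable {n : ℕ} {g k : C(ℝ, ℝ)}

lemma radialPrimitive_apply (r : ℝ) :
    radialPrimitive n g r = r * ∫ θ in (0 : ℝ)..1, θ ^ n * g (r * θ) := rfl

lemma radialPotential_apply (r : ℝ) :
    radialPotential n g r = ∫ s in (0 : ℝ)..r, radialPrimitive n g s := rfl

lemma pow_mul_radialPrimitive (r : ℝ) :
    r ^ n * radialPrimitive n g r = ∫ s in (0 : ℝ)..r, s ^ n * g s := by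
  have hsubst := intervalIntegral.smul_integral_comp_mul_left (a := 0) (b := 1)
    (fun s => s ^ n * g s) r
  simp only [mul_zero, mul_one, smul_eq_mul, mul_pow, mul_assoc,
    intervalIntegral.integral_const_mul] at hsubst
  rw [radialPrimitive_apply, mul_left_comm, hsubst]

lemma hasDerivAt_pow_mul_radialPrimitive (g : C(ℝ, ℝ)) (r : ℝ) :
    HasDerivAt (fun r => r ^ n * radialPrimitive n g r) (r ^ n * g r) r := by
  simp_rw [pow_mul_radialPrimitive]
  have hcont : Continuous fun s => s ^ n * g s := by fun_prop
  exact hcont.integral_hasStrictDerivAt 0 r |>.hasDerivAt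

lemma hasDerivAt_radialPotential (g : C(ℝ, ℝ)) (r : ℝ) :
    HasDerivAt (radialPotential n g) (radialPrimitive n g r) r :=
  ((radialPrimitive n g).continuous.integral_hasStrictDerivAt 0 r).hasDerivAt

lemma radialPrimitive_sub (n : ℕ) (g k : C(ℝ, ℝ)) :
    radialPrimitive n (g - k) = radialPrimitive n g - radialPrimitive n k := by
  ext r
  have hInt : ∀ h : C(ℝ, ℝ), IntervalIntegrable (fun θ => θ ^ n * h (r * θ)) volume 0 1 :=
    fun h => Continuous.intervalIntegrable (by fun_prop) _ _
  simp only [radialPrimitive_apply, ContinuousMap.sub_apply, mul_sub,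
    intervalIntegral.integral_sub (hInt g) (hInt k)]

lemma radialPotential_sub (n : ℕ) (g k : C(ℝ, ℝ)) :
    radialPotential n (g - k) = radialPotential n g - radialPotential n k := by
  ext r
  have hInt : ∀ h : C(ℝ, ℝ), IntervalIntegrable (radialPrimitive n h) volume 0 r :=
    fun h => (radialPrimitive n h).continuous.intervalIntegrable _ _
  simp only [radialPotential_apply, ContinuousMap.sub_apply, radialPrimitive_sub,
    intervalIntegral.integral_sub (hInt g) (hInt k)]

lemma abs_radialPrimitive_le {M : ℝ} (hM : ∀ s ∈ I, |g s| ≤ M) {r : ℝ} (hr : r ∈ I) :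
    |radialPrimitive n g r| ≤ r * (M / (n + 1)) := by
  have hInt : ‖∫ θ in (0 : ℝ)..1, θ ^ n * g (r * θ)‖ ≤ ∫ θ in (0 : ℝ)..1, θ ^ n * M := by
    refine intervalIntegral.norm_integral_le_of_norm_le zero_le_one (.of_forall fun θ hθ => ?_)
      (Continuous.intervalIntegrable (by fun_prop) _ _)
    rw [norm_mul, norm_pow, Real.norm_of_nonneg hθ.1.le]
    have hrθ : r * θ ∈ I := unitInterval.mul_mem hr (Ioc_subset_Icc_self hθ)
    exact mul_le_mul_of_nonneg_left (hM _ hrθ) (pow_nonneg hθ.1.le n)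
  rw [radialPrimitive_apply, abs_mul, abs_of_nonneg hr.1]
  refine mul_le_mul_of_nonneg_left (hInt.trans_eq ?_) hr.1
  exact radialInt_const M

lemma abs_radialPotential_le {M : ℝ} (hM : ∀ s ∈ I, |g s| ≤ M) {r : ℝ} (hr : r ∈ I) :
    |radialPotential n g r| ≤ r ^ 2 / 2 * (M / (n + 1)) := by
  have hInt : ‖∫ s in (0 : ℝ)..r, radialPrimitive n g s‖ ≤ ∫ s in (0 : ℝ)..r, s * (M / (n + 1)) :=
    intervalIntegral.norm_integral_le_of_norm_le hr.1
      (.of_forall fun s hs => abs_radialPrimitive_le hM ⟨hs.1.le, hs.2.trans hr.2⟩)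
      (Continuous.intervalIntegrable (by fun_prop) _ _)
  rwa [intervalIntegral.integral_mul_const, integral_id, zero_pow two_ne_zero, sub_zero] at hInt

end Potential

section SolutionOperator

/-- The extension of a function on `[0,1]` to the line by its boundary values. -/
noncomputable def lineExtend (u : C(I, ℝ)) : C(ℝ, ℝ) := u.IccExtend zero_le_one

lemma lineExtend_coe (u : C(I, ℝ)) (r : I) : lineExtend u r = u r := IccExtend_val _ _ r

lemma lineExtend_of_mem (u : C(I, ℝ)) {r : ℝ} (hr : r ∈ I) : lineExtend u r = u ⟨r, hr⟩ :=
  lineExtend_coe u ⟨r, hr⟩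

lemma abs_lineExtend_sub_le (u w : C(I, ℝ)) (r : ℝ) :
    |lineExtend u r - lineExtend w r| ≤ dist u w :=
  ContinuousMap.dist_apply_le_dist (f := u) (g := w) (projIcc 0 1 zero_le_one r)

lemma monotoneOn_lineExtend {u : C(I, ℝ)} : MonotoneOn (lineExtend u) I ↔ Monotone u := by
  simp only [MonotoneOn, Monotone, Subtype.forall, Subtype.mk_le_mk]
  refine forall₂_congr fun r hr => forall₂_congr fun s hs => ?_
  rw [lineExtend_of_mem u hr, lineExtend_of_mem u hs]

lemma antitoneOn_lineExtend {u : C(I, ℝ)} : AntitoneOn (lineExtend u) I ↔ Antitone u := by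
  simp only [AntitoneOn, Antitone, Subtype.forall, Subtype.mk_le_mk]
  refine forall₂_congr fun r hr => forall₂_congr fun s hs => ?_
  rw [lineExtend_of_mem u hr, lineExtend_of_mem u hs]

/-- The solution map `u ↦ w` of the radial problem `Δw = u - h`, `w'(0) = 0`. The additive constant
is chosen so that `w` and `h` have the same mean, because then a fixed point satisfies the
compatibility condition `∫ rⁿ (u - h) = 0`, which is `u'(1) = 0`. -/
noncomputable def poissonStep (n : ℕ) (h u : C(I, ℝ)) : C(I, ℝ) where
  toFun r := radialPotential n (lineExtend u - lineExtend h) r + (n + 1) *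
    (radialInt n (lineExtend h) - radialInt n (radialPotential n (lineExtend u - lineExtend h)))

lemma lineExtend_poissonStep (n : ℕ) (h u : C(I, ℝ)) :
    EqOn (lineExtend (poissonStep n h u))
      (fun r => radialPotential n (lineExtend u - lineExtend h) r + (n + 1) *
        (radialInt n (lineExtend h) -
          radialInt n (radialPotential n (lineExtend u - lineExtend h)))) I :=
  fun _ hr => lineExtend_of_mem _ hr

variable {n : ℕ}

lemma abs_radialPotential_lineExtend_sub_le (h u w : C(I, ℝ)) {r : ℝ} (hr : r ∈ I) :
    |radialPotential n (lineExtend u - lineExtend h) r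
      - radialPotential n (lineExtend w - lineExtend h) r| ≤
      r ^ 2 / 2 * (dist u w / (n + 1)) := by
  rw [← ContinuousMap.sub_apply, ← radialPotential_sub, sub_sub_sub_cancel_right]
  exact abs_radialPotential_le (fun s _ => abs_lineExtend_sub_le u w s) hr

lemma contractingWith_poissonStep (n : ℕ) (h : C(I, ℝ)) :
    ContractingWith (2 / 3) (poissonStep n h) := by
  refine ⟨by rw [← NNReal.coe_lt_coe]; norm_num, LipschitzWith.of_dist_le_mul fun u w => ?_⟩
  rw [ContinuousMap.dist_le (by positivity)]
  intro r
  set V := radialPotential n (lineExtend u - lineExtend h)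
  set W := radialPotential n (lineExtend w - lineExtend h)
  set d := dist u w
  have hd : 0 ≤ d := dist_nonneg
  have hn : (0 : ℝ) < n + 1 := by positivity
  have hVW : ∀ r ∈ I, |V r - W r| ≤ r ^ 2 / 2 * (d / (n + 1)) := fun r hr =>
    abs_radialPotential_lineExtend_sub_le h u w hr
  have hmean : |radialInt n V - radialInt n W| ≤ d / (n + 1) / 2 * (1 / (n + 2 + 1)) := by
    rw [← radialInt_sub (by fun_prop) (by fun_prop), ← Nat.cast_ofNat (n := 2), ← radialInt_pow,
      ← radialInt_const_mul]
    exact abs_radialInt_le (by fun_prop) (by fun_prop) fun r hr => (hVW r hr).trans_eq (by ring)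
  calc dist (poissonStep n h u r) (poissonStep n h w r)
      = |V r - W r - (n + 1) * (radialInt n V - radialInt n W)| := by
        rw [Real.dist_eq]; congr 1; simp only [poissonStep, ContinuousMap.coe_mk, V, W]; ring
    _ ≤ |V r - W r| + (n + 1) * |radialInt n V - radialInt n W| := by
        refine (abs_sub _ _).trans_eq ?_
        rw [abs_mul, abs_of_pos hn]
    _ ≤ 1 / 2 * d + (n + 1) * (d / (n + 1) / 2 * (1 / (n + 2 + 1))) := by
        gcongr
        refine (hVW r r.2).trans ?_
        gcongr
        · exact pow_le_one₀ r.2.1 r.2.2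
        · exact div_le_self hd (by simp)
    _ = (1 / 2 + 1 / (n + 2 + 1) / 2) * d := by field_simp
    _ ≤ (1 / 2 + 1 / 3 / 2) * d := by gcongr; linarith
    _ = (2 / 3 : NNReal) * d := by norm_num

/-- The solution operator `h ↦ u` of `-u'' - (n / r) u' + u = h` with Neumann conditions. -/
noncomputable def neumannOp (n : ℕ) (h : C(I, ℝ)) : C(I, ℝ) :=
  (contractingWith_poissonStep n h).fixedPoint

/-- The radial derivative of `neumannOp n h`. -/
noncomputable def neumannOpDeriv (n : ℕ) (h : C(I, ℝ)) : ℝ → ℝ :=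
  radialPrimitive n (lineExtend (neumannOp n h) - lineExtend h)

lemma radialInt_poissonStep (n : ℕ) (h u : C(I, ℝ)) :
    radialInt n (lineExtend (poissonStep n h u)) = radialInt n (lineExtend h) := by
  have hn : (n : ℝ) + 1 ≠ 0 := by positivity
  rw [radialInt_congr (lineExtend_poissonStep n h u), radialInt_add (by fun_prop) (by fun_prop),
    radialInt_const, mul_div_cancel_left₀ _ hn, add_sub_cancel]

lemma isNeumannSol_neumannOp (n : ℕ) (h : C(I, ℝ)) :
    IsNeumannSol n (lineExtend h) (lineExtend (neumannOp n h)) (neumannOpDeriv n h) := by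
  have hfix : poissonStep n h (neumannOp n h) = neumannOp n h :=
    (contractingWith_poissonStep n h).fixedPoint_isFixedPt
  have hstep : EqOn (lineExtend (neumannOp n h)) _ I :=
    hfix ▸ lineExtend_poissonStep n h (neumannOp n h)
  have hmean : radialInt n (lineExtend (neumannOp n h)) = radialInt n (lineExtend h) :=
    hfix ▸ radialInt_poissonStep n h (neumannOp n h)
  refine ⟨⟨fun r hr => ?_, by unfold neumannOpDeriv; fun_prop⟩, by fun_prop, fun r _ =>
    hasDerivAt_pow_mul_radialPrimitive _ r, zero_mul _, ?_⟩
  · exact ((hasDerivAt_radialPotential _ r).add_const _).hasDerivWithinAt.congr hstep (hstep hr)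
  · calc neumannOpDeriv n h 1
        = radialInt n (fun s => lineExtend (neumannOp n h) s - lineExtend h s) := by
          simpa [neumannOpDeriv, radialInt] using pow_mul_radialPrimitive (n := n)
            (g := lineExtend (neumannOp n h) - lineExtend h) 1
      _ = 0 := by rw [radialInt_sub (by fun_prop) (by fun_prop), hmean, sub_self]

end SolutionOperator

section Comparison

variable {n : ℕ} {h k : C(I, ℝ)}

lemma neumannOp_mono : Monotone (neumannOp n) := by
  intro h k hhk r
  have hle := (isNeumannSol_neumannOp n h).le_of_source_le (isNeumannSol_neumannOp n k)
    (fun s _ => hhk (projIcc 0 1 zero_le_one s)) r r.2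
  rwa [lineExtend_coe, lineExtend_coe] at hle

lemma neumannOp_const (c : ℝ) : neumannOp n (.const I c) = .const I c := by
  have hsol := isNeumannSol_neumannOp n (.const I c)
  ext r
  rw [← lineExtend_coe]
  exact le_antisymm (hsol.le_of_source_le (.const n c) (fun _ _ => le_rfl) r r.2)
    ((IsNeumannSol.const n c).le_of_source_le hsol (fun _ _ => le_rfl) r r.2)

lemma dist_neumannOp_le (h k : C(I, ℝ)) :
    dist (neumannOp n h) (neumannOp n k) ≤ dist h k := by
  rw [ContinuousMap.dist_le dist_nonneg]
  intro r
  have hdiff := (isNeumannSol_neumannOp n h).sub (isNeumannSol_neumannOp n k)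
  rw [Real.dist_eq, ← lineExtend_coe (neumannOp n h), ← lineExtend_coe (neumannOp n k), abs_le]
  exact ⟨(IsNeumannSol.const n (-dist h k)).le_of_source_le hdiff
      (fun s _ => (abs_le.1 (abs_lineExtend_sub_le h k s)).1) r r.2,
    hdiff.le_of_source_le (.const n (dist h k))
      (fun s _ => (abs_le.1 (abs_lineExtend_sub_le h k s)).2) r r.2⟩

lemma continuous_neumannOp : Continuous (neumannOp n) :=
  (LipschitzWith.of_dist_le_mul (K := 1) fun h k => by
    simpa using dist_neumannOp_le h k).continuous

lemma monotone_neumannOp_apply (hh : Monotone h) : Monotone (neumannOp n h) :=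
  monotoneOn_lineExtend.1 ((isNeumannSol_neumannOp n h).monotoneOn (monotoneOn_lineExtend.2 hh))

lemma antitone_neumannOp_apply (hh : Antitone h) : Antitone (neumannOp n h) :=
  antitoneOn_lineExtend.1 ((isNeumannSol_neumannOp n h).antitoneOn (antitoneOn_lineExtend.2 hh))

end Comparison

section Picard

/-- The map `u ↦ (-Δ + 1)⁻¹ f(u)` on radial functions, whose fixed points are the radial Neumann
solutions of `-Δu + u = f(u)`. -/
noncomputable def picard (n : ℕ) (f : C(ℝ, ℝ)) (u : C(I, ℝ)) : C(I, ℝ) :=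
  neumannOp n (f.comp u)

/-- The radial derivative of `picard n f u`. -/
noncomputable def picardDeriv (n : ℕ) (f : C(ℝ, ℝ)) (u : C(I, ℝ)) : ℝ → ℝ :=
  neumannOpDeriv n (f.comp u)

variable {n : ℕ} {f : C(ℝ, ℝ)} {u : C(I, ℝ)}

lemma isNeumannSol_picard (n : ℕ) (f : C(ℝ, ℝ)) (u : C(I, ℝ)) :
    IsNeumannSol n (fun r => f (lineExtend u r)) (lineExtend (picard n f u)) (picardDeriv n f u) :=
  isNeumannSol_neumannOp n (f.comp u)

lemma continuous_picard : Continuous (picard n f) :=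
  continuous_neumannOp.comp (ContinuousMap.continuous_postcomp f)

lemma picard_mono (hf : Monotone f) : Monotone (picard n f) := fun _ _ h =>
  neumannOp_mono fun r => hf (h r)

lemma picard_const (c : ℝ) : picard n f (.const I c) = .const I (f c) := neumannOp_const (f c)

lemma monotone_picard_apply (hf : Monotone f) (hu : Monotone u) : Monotone (picard n f u) :=
  monotone_neumannOp_apply (hf.comp hu)

lemma antitone_picard_apply (hf : Monotone f) (hu : Antitone u) : Antitone (picard n f u) :=
  antitone_neumannOp_apply (hf.comp_antitone hu)

end Picard

/-! ### The energy -/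

section Energy

variable {n : ℕ} {f F : ℝ → ℝ} {u v w z : ℝ → ℝ}

/-- The squared `H¹` norm of a radial function `u` with derivative `v`. -/
noncomputable def h1NormSq (n : ℕ) (u v : ℝ → ℝ) : ℝ := radialInt n fun r => v r ^ 2 + u r ^ 2

lemma h1NormSq_nonneg : 0 ≤ h1NormSq n u v := radialInt_nonneg fun _ _ => by positivity

/-- The energy functional of `-Δu + u = F'(u)` at a radial function `u` with derivative `v`. -/
noncomputable def energy (n : ℕ) (F u v : ℝ → ℝ) : ℝ :=
  radialInt n fun r => (v r ^ 2 + u r ^ 2) / 2 - F (u r)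

/-- By convexity of `F`, passing from `u` to `w = (-Δ + 1)⁻¹ f(u)` lowers the energy by at least
half the squared `H¹` distance. -/
lemma energy_add_le_of_isNeumannSol (hf : Continuous f) (hF : Continuous F)
    (hsub : ∀ x y, F x + f x * (y - x) ≤ F y) (hu : IsC1On u v)
    (hw : IsNeumannSol n (fun r => f (u r)) w z) :
    energy n F w z + 1 / 2 * h1NormSq n (fun r => w r - u r) (fun r => z r - v r)
      ≤ energy n F u v := by
  have hu0 := hu.continuousOn
  have hu1 := hu.continuousOn_deriv
  have hw0 := hw.continuousOn
  have hw1 := hw.continuousOn_deriv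
  have hpointwise : ∀ r ∈ I, (z r ^ 2 + w r ^ 2) / 2 - F (w r)
      + 1 / 2 * ((z r - v r) ^ 2 + (w r - u r) ^ 2) ≤ (v r ^ 2 + u r ^ 2) / 2 - F (u r)
      + (z r * (z r - v r) + w r * (w r - u r) - f (u r) * (w r - u r)) := fun r _ => by
    linear_combination hsub (u r) (w r)
  have hle := radialInt_mono (n := n) (by fun_prop) (by fun_prop) hpointwise
  have hgreen : radialInt n (fun r => z r * (z r - v r) + w r * (w r - u r)
      - f (u r) * (w r - u r)) = 0 := by
    rw [radialInt_sub (by fun_prop) (by fun_prop), hw.radialInt_green (hw.toIsC1On.sub hu),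
      sub_self]
  rw [radialInt_add (by fun_prop) (by fun_prop), radialInt_add (by fun_prop) (by fun_prop),
    radialInt_const_mul, hgreen, add_zero] at hle
  exact hle

lemma energy_eq_of_isNeumannSol (hF : Continuous F) {h : ℝ → ℝ} (hw : IsNeumannSol n h w z) :
    energy n F w z = radialInt n (fun r => h r * w r / 2 - F (w r)) := by
  have hw0 := hw.continuousOn
  have hw1 := hw.continuousOn_deriv
  have hh := hw.continuousOn_source
  calc energy n F w z
      = radialInt n (fun r => 1 / 2 * (z r * z r + w r * w r) - F (w r)) := by
        unfold energy; congr! 2 with r; ring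
    _ = radialInt n (fun r => 1 / 2 * (h r * w r) - F (w r)) := by
        rw [radialInt_sub (by fun_prop) (by fun_prop), radialInt_const_mul,
          hw.radialInt_green hw.toIsC1On, ← radialInt_const_mul,
          radialInt_sub (by fun_prop) (by fun_prop)]
    _ = radialInt n (fun r => h r * w r / 2 - F (w r)) := by
        congr! 2 with r; ring

end Energy

/-! ### Monotone test functions -/

section TestFunction

variable {n : ℕ} {lam : ℝ} {u v z w g A B : ℝ → ℝ}

lemma IsC1On.eqOn_of_radialInt_eq (hu : IsC1On u v) (hz : IsC1On z w) (hvw : EqOn v w I)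
    (hInt : radialInt n u = radialInt n z) : EqOn u z I := by
  have hd := hu.sub hz
  have hvw' : ∀ r ∈ Ioo (0 : ℝ) 1, v r - w r = 0 :=
    fun r hr => sub_eq_zero.2 (hvw (Ioo_subset_Icc_self hr))
  have hconst : ∀ r ∈ I, u r - z r = u 0 - z 0 := fun r hr => le_antisymm
    (hd.antitoneOn (fun s hs => (hvw' s hs).le) unitInterval.zero_mem hr hr.1)
    (hd.monotoneOn (fun s hs => (hvw' s hs).ge) unitInterval.zero_mem hr hr.1)
  have hmean : (u 0 - z 0) / (n + 1) = 0 := by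
    rw [← radialInt_const (n := n), ← radialInt_congr hconst,
      radialInt_sub hu.continuousOn hz.continuousOn, hInt, sub_self]
  have h0 : u 0 - z 0 = 0 := (div_eq_zero_iff.1 hmean).resolve_right (by positivity)
  exact fun r hr => sub_eq_zero.1 ((hconst r hr).trans h0)

lemma IsC1On.radialInt_sq_pos (hu : IsC1On u v) {a : ℝ} (ha : a ∈ I) (hva : v a ≠ 0) :
    0 < radialInt n (fun r => u r ^ 2) := by
  have huc := hu.continuousOn
  by_contra! hle
  have hzero : EqOn u 0 I := fun r hr => by
    simpa using eq_zero_of_radialInt_nonpos (by fun_prop) (fun r _ => sq_nonneg (u r)) hle hr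
  exact hva ((uniqueDiffOn_Icc zero_lt_one a ha).eq_deriv _ (hu.hasDerivWithinAt a ha)
    ((hasDerivWithinAt_const a I (0 : ℝ)).congr hzero (hzero ha)))

lemma exists_isC1On_radialInt_eq_zero (n : ℕ) (hg : ContinuousOn g I) :
    ∃ G, IsC1On G g ∧ radialInt n G = 0 := by
  let e : C(ℝ, ℝ) := lineExtend ⟨domRestrict I g, hg.domRestrict⟩
  let P : ℝ → ℝ := fun r => ∫ s in (0 : ℝ)..r, e s
  have hP : ∀ r, HasDerivAt P (e r) r := fun r =>
    (e.continuous.integral_hasStrictDerivAt 0 r).hasDerivAt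
  have hPc : Continuous P := continuous_iff_continuousAt.2 fun r => (hP r).continuousAt
  refine ⟨fun r => P r - (n + 1) * radialInt n P, ⟨fun r hr => ?_, hg⟩, ?_⟩
  · have heg : e r = g r := lineExtend_of_mem _ hr
    rw [← heg]
    exact ((hP r).sub_const _).hasDerivWithinAt
  · rw [radialInt_sub hPc.continuousOn continuousOn_const, radialInt_const,
      mul_div_cancel_left₀ _ (by positivity), sub_self]

lemma exists_eq_zero_of_radialInt_eq_zero (hA : MonotoneOn A I) (hAc : ContinuousOn A I)
    (h0 : radialInt n A = 0) : ∃ c ∈ I, A c = 0 := by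
  have hpos : (0 : ℝ) < n + 1 := by positivity
  have hA0 : A 0 ≤ 0 := by
    have hle := radialInt_mono (n := n) continuousOn_const hAc
      fun r hr => hA unitInterval.zero_mem hr hr.1
    rwa [radialInt_const, h0, div_le_iff₀ hpos, zero_mul] at hle
  have hA1 : 0 ≤ A 1 := by
    have hle := radialInt_mono (n := n) hAc continuousOn_const
      fun r hr => hA hr unitInterval.one_mem hr.2
    rwa [radialInt_const, h0, le_div_iff₀ hpos, zero_mul] at hle
  exact intermediate_value_Icc zero_le_one hAc ⟨hA0, hA1⟩

/-- Subtracting from `B` its value at a zero of `A` makes the integrand nonnegative. -/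
lemma radialInt_mul_nonneg_of_monotoneOn (hA : MonotoneOn A I) (hB : MonotoneOn B I)
    (hAc : ContinuousOn A I) (hBc : ContinuousOn B I) (h0 : radialInt n A = 0) :
    0 ≤ radialInt n fun r => A r * B r := by
  obtain ⟨c, hc, hAc0⟩ := exists_eq_zero_of_radialInt_eq_zero hA hAc h0
  have hshift : radialInt n (fun r => A r * B r) = radialInt n (fun r => A r * (B r - B c)) := by
    simp only [mul_sub, mul_comm _ (B c)]
    rw [radialInt_sub (by fun_prop) (by fun_prop), radialInt_const_mul, h0, mul_zero, sub_zero]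
  rw [hshift]
  refine radialInt_nonneg fun r hr => ?_
  rcases le_total r c with h | h
  · exact mul_nonneg_of_nonpos_of_nonpos ((hA hr hc h).trans_eq hAc0) (sub_nonpos.2 (hB hr hc h))
  · exact mul_nonneg (hAc0.symm.trans_le (hA hc hr h)) (sub_nonneg.2 (hB hc hr h))

lemma IsNeumannSol.radialInt_eq_zero_of_eigenvalue (hlam : lam ≠ 1)
    (hu : IsNeumannSol n (fun r => lam * u r) u v) : radialInt n u = 0 := by
  have hgreen : radialInt n u = lam * radialInt n u := by
    simpa only [mul_zero, zero_add, mul_one, radialInt_const_mul] using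
      hu.radialInt_green (IsC1On.const 1)
  have hmul : (lam - 1) * radialInt n u = 0 := by linear_combination -hgreen
  exact (mul_eq_zero.1 hmul).resolve_left (sub_ne_zero.2 hlam)

lemma IsNeumannSol.exists_deriv_ne_zero_of_eigenvalue (hlam : lam ≠ 1)
    (hu : IsNeumannSol n (fun r => lam * u r) u v) (hne : ∃ r ∈ I, u r ≠ 0) :
    ∃ a ∈ I, v a ≠ 0 := by
  by_contra! hv
  obtain ⟨r, hr, hur⟩ := hne
  refine hur (hu.toIsC1On.eqOn_of_radialInt_eq (n := n) (IsC1On.const 0) hv ?_ hr)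
  rw [hu.radialInt_eq_zero_of_eigenvalue hlam, radialInt_const, zero_div]

/-- `ψ`, with derivative `χ`, is a nondecreasing nonzero function of zero mean over the ball whose
Rayleigh quotient for `-Δ + 1` is at most `lam`. -/
structure IsMonotoneTestFunction (n : ℕ) (lam : ℝ) (ψ χ : ℝ → ℝ) : Prop extends IsC1On ψ χ where
  monotone : MonotoneOn ψ I
  mean_eq_zero : radialInt n ψ = 0
  sq_pos : 0 < radialInt n fun r => ψ r ^ 2
  deriv_sq_le :
    radialInt n (fun r => χ r ^ 2) ≤ (lam - 1) * radialInt n fun r => ψ r ^ 2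

/-- The zero-mean primitive `ψ` of the positive part of `u'` is a test function: `u = ψ - ζ` with
`ζ` the corresponding primitive of the negative part, and `∫ ζ ψ ≥ 0` as both are monotone. -/
lemma exists_isMonotoneTestFunction_of_pos (hlam : 1 < lam)
    (hu : IsNeumannSol n (fun r => lam * u r) u v) {a : ℝ} (ha : a ∈ I) (hva : 0 < v a) :
    ∃ ψ χ, IsMonotoneTestFunction n lam ψ χ := by
  have hvc := hu.continuousOn_deriv
  have huc := hu.continuousOn
  obtain ⟨ψ, hψ, hψ0⟩ := exists_isC1On_radialInt_eq_zero n (g := fun r => max (v r) 0)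
    (by fun_prop)
  obtain ⟨ζ, hζ, hζ0⟩ := exists_isC1On_radialInt_eq_zero n (g := fun r => max (-v r) 0)
    (by fun_prop)
  have hψc := hψ.continuousOn
  have hζc := hζ.continuousOn
  have hψm := hψ.monotoneOn fun r _ => le_max_right _ _
  have hζm := hζ.monotoneOn fun r _ => le_max_right _ _
  have hdecomp : EqOn u (fun r => ψ r - ζ r) I := by
    refine hu.toIsC1On.eqOn_of_radialInt_eq (n := n) (hψ.sub hζ) (fun r _ => ?_) ?_
    · simpa only [max_comm (0 : ℝ)] using (max_zero_sub_max_neg_zero_eq_self (v r)).symm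
    · rw [hu.radialInt_eq_zero_of_eigenvalue hlam.ne', radialInt_sub hψc hζc, hψ0, hζ0, sub_zero]
  have hcheb := radialInt_mul_nonneg_of_monotoneOn hζm hψm hζc hψc hζ0
  have hsplit : radialInt n (fun r => u r * ψ r) =
      radialInt n (fun r => ψ r ^ 2) - radialInt n (fun r => ζ r * ψ r) := by
    rw [← radialInt_sub (by fun_prop) (by fun_prop)]
    exact radialInt_congr fun r hr => by rw [hdecomp hr]; ring
  have hparts : ∀ r, max (v r) 0 ^ 2 = v r * max (v r) 0 := fun r => by
    rcases max_cases (v r) 0 with ⟨h, -⟩ | ⟨h, -⟩ <;> rw [h] <;> ring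
  refine ⟨ψ, _, hψ, hψm, hψ0, hψ.radialInt_sq_pos ha (by rw [max_eq_left hva.le]; exact hva.ne'),
    ?_⟩
  calc radialInt n (fun r => max (v r) 0 ^ 2)
      = (lam - 1) * radialInt n (fun r => u r * ψ r) := by
        have hgreen := hu.radialInt_green hψ
        simp only [mul_assoc] at hgreen
        rw [radialInt_add (by fun_prop) (by fun_prop), radialInt_const_mul] at hgreen
        simp only [hparts]
        linear_combination hgreen
    _ ≤ (lam - 1) * radialInt n (fun r => ψ r ^ 2) :=
        mul_le_mul_of_nonneg_left (by linarith) (sub_nonneg.2 hlam.le)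

lemma exists_isMonotoneTestFunction (hlam : 1 < lam)
    (hu : IsNeumannSol n (fun r => lam * u r) u v) (hne : ∃ r ∈ I, u r ≠ 0) :
    ∃ ψ χ, IsMonotoneTestFunction n lam ψ χ := by
  obtain ⟨a, ha, hva⟩ := hu.exists_deriv_ne_zero_of_eigenvalue hlam.ne' hne
  rcases hva.lt_or_gt with h | h
  · have hneg : IsNeumannSol n (fun r => lam * -u r) (fun r => -u r) fun r => -v r := by
      simpa only [mul_neg] using hu.neg
    exact exists_isMonotoneTestFunction_of_pos hlam hneg ha (neg_pos.2 h)
  · exact exists_isMonotoneTestFunction_of_pos hlam hu ha h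

end TestFunction

/-! ### Bounds in terms of the `H¹` norm -/

section Pointwise

variable {n : ℕ} {u v g : ℝ → ℝ}

lemma IsC1On.sq_one_le (h : IsC1On u v) : u 1 ^ 2 ≤ (n + 2) * h1NormSq n u v := by
  have hu := h.continuousOn
  have hv := h.continuousOn_deriv
  have hcont : ContinuousOn (fun r => r ^ n * ((n + 1) * u r ^ 2 + r * (2 * u r * v r))) I := by
    fun_prop
  have hparts : radialInt n (fun r => (n + 1) * u r ^ 2 + r * (2 * u r * v r))
      = 1 ^ (n + 1) * u 1 ^ 2 - 0 ^ (n + 1) * u 0 ^ 2 := by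
    refine intervalIntegral.integral_eq_sub_of_hasDerivAt_of_le zero_le_one
      (f := fun r => r ^ (n + 1) * u r ^ 2) (by fun_prop) (fun r hr => ?_)
      (ContinuousOn.intervalIntegrable (by rwa [uIcc_of_le zero_le_one]))
    refine ((hasDerivAt_pow (n + 1) r).mul ((h.hasDerivAt hr).pow 2)).congr_deriv ?_
    push_cast [Nat.add_sub_cancel, Pi.pow_apply]
    ring
  rw [one_pow, one_mul, zero_pow n.succ_ne_zero, zero_mul, sub_zero] at hparts
  rw [← hparts, h1NormSq, ← radialInt_const_mul]
  refine radialInt_mono (by fun_prop) (by fun_prop) fun r hr => ?_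
  have hcross : r * (2 * u r * v r) ≤ u r ^ 2 + v r ^ 2 := by
    have hr2 : r ^ 2 ≤ 1 := pow_le_one₀ hr.1 hr.2
    nlinarith [sq_nonneg (u r - r * v r), mul_le_mul_of_nonneg_right hr2 (sq_nonneg (v r))]
  have hn : 0 ≤ (n + 1 : ℝ) * v r ^ 2 := by positivity
  linarith

lemma integral_pow_mul_le_radialInt (hg : ContinuousOn g I) (h0 : ∀ r ∈ I, 0 ≤ g r) {r : ℝ}
    (hr : r ∈ I) : ∫ s in r..1, s ^ n * g s ≤ radialInt n g := by
  refine intervalIntegral.integral_mono_interval hr.1 hr.2 le_rfl ?_ (intervalIntegrable_pow_mul hg)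
  refine (ae_restrict_iff' measurableSet_Ioc).2 (.of_forall fun s hs => ?_)
  exact mul_nonneg (pow_nonneg hs.1.le n) (h0 s (Ioc_subset_Icc_self hs))

lemma neg_pow_mul_sq_le_rpow {β s : ℝ} (hβ : 0 < β) (hβn : n ≤ β + 1) (hs : s ∈ Ioc (0 : ℝ) 1)
    (x y : ℝ) : -(1 / β) * (s ^ n * y ^ 2) ≤ β * s ^ (β - 1) * x ^ 2 + s ^ β * (2 * x * y) := by
  have hsβ : s ^ β = s ^ (β - 1) * s := by
    rw [← Real.rpow_add_one hs.1.ne', sub_add_cancel]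
  have hpow : s ^ (β - 1) * s * s ≤ s ^ n := by
    rw [← hsβ, ← Real.rpow_add_one hs.1.ne', ← Real.rpow_natCast]
    exact Real.rpow_le_rpow_of_exponent_ge hs.1 hs.2 hβn
  have hsquare : 0 ≤ s ^ (β - 1) / β * (β * x + s * y) ^ 2 :=
    mul_nonneg (div_nonneg (Real.rpow_nonneg hs.1.le _) hβ.le) (sq_nonneg _)
  have hexpand : s ^ (β - 1) / β * (β * x + s * y) ^ 2 = β * s ^ (β - 1) * x ^ 2 +
      s ^ (β - 1) * s * (2 * x * y) + 1 / β * (s ^ (β - 1) * s * s * y ^ 2) := by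
    field_simp
    ring
  have hle : 1 / β * (s ^ (β - 1) * s * s * y ^ 2) ≤ 1 / β * (s ^ n * y ^ 2) := by gcongr
  rw [hsβ]
  linarith

/-- A radial function of finite `H¹` norm blows up at most like `r ^ (-β / 2)` at the origin. -/
lemma IsC1On.rpow_mul_sq_le (h : IsC1On u v) {β : ℝ} (hβ : 0 < β) (hβn : n ≤ β + 1) {r : ℝ}
    (hr : r ∈ Ioc (0 : ℝ) 1) : r ^ β * u r ^ 2 ≤ (n + 2 + 1 / β) * h1NormSq n u v := by
  have hsub : Icc r 1 ⊆ I := Icc_subset_Icc_left hr.1.le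
  have hrpow : ∀ γ : ℝ, ContinuousOn (fun s : ℝ => s ^ γ) (Icc r 1) := fun γ s hs =>
    (Real.continuousAt_rpow_const s γ (.inl (hr.1.trans_le hs.1).ne')).continuousWithinAt
  have hu := h.continuousOn
  have hv := h.continuousOn_deriv
  have hu' := hu.mono hsub
  have hv' := hv.mono hsub
  have hInt : IntervalIntegrable (fun s => β * s ^ (β - 1) * u s ^ 2 + s ^ β * (2 * u s * v s))
      volume r 1 :=
    ContinuousOn.intervalIntegrable (by have := hrpow (β - 1); rw [uIcc_of_le hr.2]; fun_prop)
  have hInt' : IntervalIntegrable (fun s => s ^ n * v s ^ 2) volume r 1 :=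
    ContinuousOn.intervalIntegrable (by rw [uIcc_of_le hr.2]; fun_prop)
  have hftc : ∫ s in r..1, (β * s ^ (β - 1) * u s ^ 2 + s ^ β * (2 * u s * v s))
      = 1 ^ β * u 1 ^ 2 - r ^ β * u r ^ 2 := by
    refine intervalIntegral.integral_eq_sub_of_hasDerivAt_of_le hr.2
      (f := fun s => s ^ β * u s ^ 2) ((hrpow β).mul (hu'.pow 2)) (fun s hs => ?_) hInt
    have hs0 : 0 < s := hr.1.trans hs.1
    refine ((Real.hasDerivAt_rpow_const (.inl hs0.ne')).mul
      ((h.hasDerivAt ⟨hs0, hs.2⟩).pow 2)).congr_deriv ?_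
    simp
  have hlower := intervalIntegral.integral_mono_on hr.2 (hInt'.const_mul (-(1 / β))) hInt
    fun s hs => neg_pow_mul_sq_le_rpow hβ hβn ⟨hr.1.trans_le hs.1, hs.2⟩ (u s) (v s)
  rw [intervalIntegral.integral_const_mul, hftc, Real.one_rpow, one_mul] at hlower
  have htail : 1 / β * ∫ s in r..1, s ^ n * v s ^ 2 ≤ 1 / β * h1NormSq n u v := by
    gcongr
    refine (integral_pow_mul_le_radialInt (by fun_prop) (fun s _ => sq_nonneg (v s))
      (Ioc_subset_Icc_self hr)).trans (radialInt_mono (by fun_prop) (by fun_prop) fun s _ => ?_)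
    exact le_add_of_nonneg_right (sq_nonneg _)
  linarith [h.sq_one_le (n := n)]

end Pointwise

section AmbrosettiRabinowitz

variable {n : ℕ} {f F u v w z : ℝ → ℝ}

lemma add_mul_self_le {ε : ℝ} (hε : 0 < ε) (x y : ℝ) :
    (y + x) * x ≤ (1 + ε / 4) * x ^ 2 + 1 / ε * y ^ 2 := by
  have hsquare : 0 ≤ 1 / ε * (y - ε / 2 * x) ^ 2 := by positivity
  have hexpand : 1 / ε * (y - ε / 2 * x) ^ 2
      = (1 + ε / 4) * x ^ 2 + 1 / ε * y ^ 2 - (y + x) * x := by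
    field_simp
    ring
  linarith

lemma IsNeumannSol.radialInt_mul_le {h : ℝ → ℝ} (hw : IsNeumannSol n h w z) (hu : IsC1On u v)
    {ε : ℝ} (hε : 0 < ε) :
    radialInt n (fun r => h r * u r) ≤ (1 + ε / 4) * h1NormSq n u v
      + 1 / ε * h1NormSq n (fun r => w r - u r) (fun r => z r - v r) := by
  have hu0 := hu.continuousOn
  have hu1 := hu.continuousOn_deriv
  have hw0 := hw.continuousOn
  have hw1 := hw.continuousOn_deriv
  rw [← hw.radialInt_green hu, h1NormSq, h1NormSq, ← radialInt_const_mul, ← radialInt_const_mul,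
    ← radialInt_add (by fun_prop) (by fun_prop)]
  refine radialInt_mono (by fun_prop) (by fun_prop) fun r _ => ?_
  have hv := add_mul_self_le hε (v r) (z r - v r)
  have hu := add_mul_self_le hε (u r) (w r - u r)
  rw [sub_add_cancel] at hv hu
  linarith

lemma h1NormSq_le_of_ambrosettiRabinowitz {μ c : ℝ} (hμ : 2 < μ) (hf : Continuous f)
    (hF : Continuous F) (hAR : ∀ s, 0 ≤ s → F s ≤ f s * s / μ + c) (hu : IsC1On u v)
    (hpos : ∀ r ∈ I, 0 ≤ u r) (hw : IsNeumannSol n (fun r => f (u r)) w z) :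
    (μ - 2) / (4 * μ) * h1NormSq n u v ≤ energy n F u v
      + 1 / (μ * (μ - 2)) * h1NormSq n (fun r => w r - u r) (fun r => z r - v r)
      + c / (n + 1) := by
  have hu0 := hu.continuousOn
  have hu1 := hu.continuousOn_deriv
  have hμ0 : 0 < μ := by linarith
  have hμ2 : 0 < μ - 2 := by linarith
  have henergy : energy n F u v = 1 / 2 * h1NormSq n u v - radialInt n (fun r => F (u r)) := by
    rw [h1NormSq, ← radialInt_const_mul, ← radialInt_sub (by fun_prop) (by fun_prop), energy]
    congr! 2 with r
    ring
  have hprimitive : radialInt n (fun r => F (u r)) ≤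
      1 / μ * radialInt n (fun r => f (u r) * u r) + c / (n + 1) := by
    rw [← radialInt_const_mul, ← radialInt_const, ← radialInt_add (by fun_prop) (by fun_prop)]
    refine radialInt_mono (by fun_prop) (by fun_prop) fun r hr => ?_
    linear_combination hAR (u r) (hpos r hr)
  have hgreen := mul_le_mul_of_nonneg_left (hw.radialInt_mul_le hu hμ2) (one_div_pos.2 hμ0).le
  have hcoeff : ∀ x y : ℝ, 1 / μ * ((1 + (μ - 2) / 4) * x + 1 / (μ - 2) * y)
      = 1 / 2 * x - (μ - 2) / (4 * μ) * x + 1 / (μ * (μ - 2)) * y := fun x y => by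
    field_simp
    ring
  rw [hcoeff] at hgreen
  linarith

end AmbrosettiRabinowitz

/-! ### Sup bounds for subcritical growth -/

section SupBound

variable {n : ℕ} {h u v : ℝ → ℝ} {K τ : ℝ}

lemma IsNeumannSol.neg_rpow_le_deriv (hs : IsNeumannSol n h u v) (hτ : 0 < n + 1 + τ)
    (hu : ∀ r ∈ Ioo (0 : ℝ) 1, -K * r ^ τ ≤ u r - h r) :
    ∀ r ∈ Ioc (0 : ℝ) 1, -(K / (n + 1 + τ)) * r ^ (1 + τ) ≤ v r := by
  have hflux := hs.continuousOn_flux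
  have hrpow : Continuous fun r : ℝ => r ^ (n + 1 + τ) := Real.continuous_rpow_const hτ.le
  have hmono : MonotoneOn (fun r => r ^ n * v r + K / (n + 1 + τ) * r ^ (n + 1 + τ)) I := by
    refine monotoneOn_of_hasDerivWithinAt_nonneg (f' := fun r => r ^ n * (u r - h r + K * r ^ τ))
      (convex_Icc 0 1) (by fun_prop) ?_ ?_ <;> rw [interior_Icc] <;> intro r hr
    · refine (((hs.hasDerivAt_flux r hr).add ((Real.hasDerivAt_rpow_const
        (.inl hr.1.ne')).const_mul (K / (n + 1 + τ)))).congr_deriv ?_).hasDerivWithinAt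
      rw [add_sub_right_comm, add_sub_cancel_right, Real.rpow_add hr.1, Real.rpow_natCast]
      field_simp
    · exact mul_nonneg (pow_nonneg hr.1.le n) (by linarith [hu r hr])
  intro r hr
  have h0r := hmono unitInterval.zero_mem (Ioc_subset_Icc_self hr) hr.1.le
  simp only [hs.flux_zero, Real.zero_rpow hτ.ne', mul_zero, add_zero] at h0r
  have hsplit : r ^ (n + 1 + τ) = r ^ n * r ^ (1 + τ) := by
    rw [add_assoc, Real.rpow_add hr.1, Real.rpow_natCast]
  rw [hsplit] at h0r
  have hfactor : 0 ≤ r ^ n * (v r + K / (n + 1 + τ) * r ^ (1 + τ)) := by linarith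
  linarith [nonneg_of_mul_nonneg_right hfactor (pow_pos hr.1 n)]

lemma IsNeumannSol.abs_deriv_le (hs : IsNeumannSol n h u v) (hu : ∀ r ∈ I, |u r - h r| ≤ K) :
    ∀ r ∈ I, |v r| ≤ K := by
  have hpos : (0 : ℝ) < n + 1 + 0 := by positivity
  have hK : 0 ≤ K := (abs_nonneg _).trans (hu 0 unitInterval.zero_mem)
  intro r hr
  rcases hr.1.eq_or_lt with rfl | hr0
  · simpa [hs.deriv_zero] using hK
  have hlower := hs.neg_rpow_le_deriv (K := K) hpos (fun s hs' => by
    simpa using (abs_le.1 (hu s (Ioo_subset_Icc_self hs'))).1) r ⟨hr0, hr.2⟩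
  have hupper := hs.neg.neg_rpow_le_deriv (K := K) hpos (fun s hs' => by
    rw [Real.rpow_zero]
    linarith [(abs_le.1 (hu s (Ioo_subset_Icc_self hs'))).2]) r ⟨hr0, hr.2⟩
  simp only [add_zero, Real.rpow_one] at hlower hupper
  have hle : K / (n + 1) * r ≤ K :=
    (mul_le_of_le_one_right (by positivity) hr.2).trans (div_le_self hK (by simp))
  rw [abs_le]
  constructor <;> linarith

lemma IsNeumannSol.le_add_rpow (hs : IsNeumannSol n h u v) (hτ : 0 < n + 1 + τ) (hτ2 : 0 < 2 + τ)
    (hK : 0 ≤ K) (hu : ∀ r ∈ Ioo (0 : ℝ) 1, -K * r ^ τ ≤ u r - h r) {r s : ℝ} (hr : r ∈ I)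
    (hs1 : s ∈ I) (hrs : r ≤ s) :
    u r ≤ u s + K / (n + 1 + τ) / (2 + τ) * s ^ (2 + τ) := by
  have hrpow : Continuous fun r : ℝ => r ^ (2 + τ) := Real.continuous_rpow_const hτ2.le
  have huc := hs.continuousOn
  have hmono : MonotoneOn (fun r => u r + K / (n + 1 + τ) / (2 + τ) * r ^ (2 + τ)) I := by
    refine monotoneOn_of_hasDerivWithinAt_nonneg
      (f' := fun r => v r + K / (n + 1 + τ) * r ^ (1 + τ))
      (convex_Icc 0 1) (by fun_prop) ?_ ?_ <;> rw [interior_Icc] <;> intro r hr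
    · refine (((hs.hasDerivAt hr).add ((Real.hasDerivAt_rpow_const
        (.inl hr.1.ne')).const_mul (K / (n + 1 + τ) / (2 + τ)))).congr_deriv ?_).hasDerivWithinAt
      rw [show 2 + τ - 1 = 1 + τ by ring]
      field_simp
    · linarith [hs.neg_rpow_le_deriv hτ hu r (Ioo_subset_Ioc_self hr)]
  have hle := hmono hr hs1 hrs
  have hnonneg : 0 ≤ K / (n + 1 + τ) / (2 + τ) * r ^ (2 + τ) :=
    mul_nonneg (by positivity) (Real.rpow_nonneg hr.1 _)
  simp only at hle
  linarith

lemma rpow_sub_one_le_of_rpow_mul_sq_le {p β B r x M : ℝ} (hp : 2 < p) (hB : 0 ≤ B) (hr : 0 < r)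
    (hx : 0 ≤ x) (hxM : x ≤ M) (h : r ^ β * x ^ 2 ≤ B) :
    x ^ (p - 1) ≤ B ^ ((p - 2) / 2) * M * r ^ (-(β * (p - 2) / 2)) := by
  have hsq : x ^ 2 ≤ B * r ^ (-β) := by
    rw [Real.rpow_neg hr.le, ← div_eq_mul_inv, le_div_iff₀ (Real.rpow_pos_of_pos hr β), mul_comm]
    exact h
  calc x ^ (p - 1) = (x ^ 2) ^ ((p - 2) / 2) * x := by
        rw [← Real.rpow_natCast, ← Real.rpow_mul hx,
          ← Real.rpow_add_one' hx (by push_cast; linarith)]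
        push_cast
        ring_nf
    _ ≤ (B * r ^ (-β)) ^ ((p - 2) / 2) * M := by gcongr
    _ = B ^ ((p - 2) / 2) * M * r ^ (-(β * (p - 2) / 2)) := by
        rw [Real.mul_rpow hB (Real.rpow_nonneg hr.le _), ← Real.rpow_mul hr.le, neg_mul,
          mul_div_assoc]
        ring

lemma exists_mul_rpow_lt {γ ε : ℝ} (hγ : 0 < γ) (hε : 0 < ε) (A : ℝ) :
    ∃ r ∈ Ioc (0 : ℝ) 1, A * r ^ γ < ε := by
  have hlim : Tendsto (fun r : ℝ => A * r ^ γ) (𝓝[>] 0) (𝓝 0) := by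
    have h := ((Real.continuous_rpow_const hγ.le).const_mul A).tendsto 0
    rw [Real.zero_rpow hγ.ne', mul_zero] at h
    exact h.mono_left nhdsWithin_le_nhds
  exact (Eventually.and (Ioc_mem_nhdsGT zero_lt_one) (hlim.eventually_lt_const hε)).exists

/-- Below a small radius the decay of `u` makes the source at most a small multiple of
`M r ^ τ` with `τ > -2`; above it the decay of `w` already bounds `w`. -/
lemma exists_le_add_half {p C β B : ℝ} (hp : 2 < p) (hC : 0 ≤ C) (hβ0 : 0 ≤ β)
    (hβ : β * (p - 2) / 2 < min (2 : ℝ) (n + 1)) (hB : 0 ≤ B) :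
    ∃ L : ℝ, ∀ {f u w z : ℝ → ℝ} {M : ℝ}, (∀ s, 0 ≤ s → f s ≤ C * s ^ (p - 1)) →
      (∀ r ∈ I, 0 ≤ u r) → (∀ r ∈ I, u r ≤ M) → (∀ r ∈ Ioc (0 : ℝ) 1, r ^ β * u r ^ 2 ≤ B) →
      IsNeumannSol n (fun r => f (u r)) w z → (∀ r ∈ I, 0 ≤ w r) →
      (∀ r ∈ Ioc (0 : ℝ) 1, r ^ β * w r ^ 2 ≤ B) → ∀ r ∈ I, w r ≤ L + M / 2 := by
  set τ : ℝ := -(β * (p - 2) / 2) with hτ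
  obtain ⟨hτ2, hτn⟩ : 0 < 2 + τ ∧ 0 < n + 1 + τ := by
    rw [lt_min_iff] at hβ
    constructor <;> linarith
  set D : ℝ := C * B ^ ((p - 2) / 2)
  obtain ⟨r₀, hr₀, hsmall⟩ :=
    exists_mul_rpow_lt hτ2 one_half_pos (D / (n + 1 + τ) / (2 + τ))
  refine ⟨√(B / r₀ ^ β), fun {f u w z M} hf hu0 huM huB hw hw0 hwB => ?_⟩
  have hM : 0 ≤ M := (hu0 0 unitInterval.zero_mem).trans (huM 0 unitInterval.zero_mem)
  have houter : ∀ r ∈ Icc r₀ 1, w r ≤ √(B / r₀ ^ β) := fun r hr => by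
    apply Real.le_sqrt_of_sq_le
    rw [le_div_iff₀ (Real.rpow_pos_of_pos hr₀.1 β), mul_comm]
    refine le_trans ?_ (hwB r ⟨hr₀.1.trans_le hr.1, hr.2⟩)
    gcongr
    exacts [hr₀.1.le, hr.1]
  have hsource : ∀ r ∈ Ioo (0 : ℝ) 1, -(D * M) * r ^ τ ≤ w r - f (u r) := fun r hr => by
    have hrI := Ioo_subset_Icc_self hr
    have hpow := mul_le_mul_of_nonneg_left (rpow_sub_one_le_of_rpow_mul_sq_le hp hB hr.1
      (hu0 r hrI) (huM r hrI) (huB r (Ioo_subset_Ioc_self hr))) hC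
    linear_combination hf (u r) (hu0 r hrI) + hpow + hw0 r hrI
  intro r hr
  rcases le_total r₀ r with h | h
  · exact (houter r ⟨h, hr.2⟩).trans (le_add_of_nonneg_right (by positivity))
  · have hinner := hw.le_add_rpow hτn hτ2 (by positivity) hsource hr (Ioc_subset_Icc_self hr₀) h
    have hhalf := mul_le_mul_of_nonneg_left hsmall.le hM
    linear_combination hinner + houter r₀ ⟨le_rfl, hr₀.2⟩ + hhalf

end SupBound

/-! ### Orbits of the Picard iteration -/

/-- A nonnegative nondecreasing nonlinearity `f` with primitive `F`, of growth `s ^ (p - 1)` for a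
Sobolev-subcritical exponent `p > 2` in dimension `n + 1`, satisfying the Ambrosetti–Rabinowitz
condition up to an additive constant. -/
structure IsSubcritical (n : ℕ) (f : C(ℝ, ℝ)) (F : ℝ → ℝ) : Prop where
  mono : Monotone f
  nonneg : ∀ s, 0 ≤ f s
  hasDerivAt : ∀ s, HasDerivAt F (f s) s
  growth : ∃ p C : ℝ, 2 < p ∧ (n - 1) * (p - 2) < 4 ∧ ∀ s, 0 ≤ s → f s ≤ C * s ^ (p - 1)
  superquadratic : ∃ μ c : ℝ, 2 < μ ∧ ∀ s, 0 ≤ s → F s ≤ f s * s / μ + c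

/-- The energy after one step of the iteration. -/
noncomputable def stepEnergy (n : ℕ) (f : C(ℝ, ℝ)) (F : ℝ → ℝ) (u : C(I, ℝ)) : ℝ :=
  energy n F (lineExtend (picard n f u)) (picardDeriv n f u)

section StepEnergy

variable {n : ℕ} {f : C(ℝ, ℝ)} {F : ℝ → ℝ}

lemma stepEnergy_eq (hF : Continuous F) (u : C(I, ℝ)) :
    stepEnergy n f F u = radialInt n (fun r => f (lineExtend u r) * lineExtend (picard n f u) r / 2
      - F (lineExtend (picard n f u) r)) :=
  energy_eq_of_isNeumannSol hF (isNeumannSol_picard n f u)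

lemma continuous_stepEnergy (hF : Continuous F) : Continuous (stepEnergy n f F) := by
  simp only [funext (stepEnergy_eq hF), radialInt]
  apply intervalIntegral.continuous_parametric_intervalIntegral_of_continuous'
  have hpicard : Continuous (picard n f) := continuous_picard
  have heval : Continuous fun q : C(I, ℝ) × ℝ => lineExtend q.1 q.2 := by
    change Continuous fun q : C(I, ℝ) × ℝ => q.1 (projIcc 0 1 zero_le_one q.2)
    fun_prop
  have heval' : Continuous fun q : C(I, ℝ) × ℝ => lineExtend (picard n f q.1) q.2 :=
    heval.comp (f := fun q : C(I, ℝ) × ℝ => (picard n f q.1, q.2)) (by fun_prop)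
  simp only [Function.uncurry_def]
  fun_prop

end StepEnergy

namespace IsSubcritical

variable {n : ℕ} {f : C(ℝ, ℝ)} {F : ℝ → ℝ}

lemma continuous_primitive (hf : IsSubcritical n f F) : Continuous F :=
  continuous_iff_continuousAt.2 fun s => (hf.hasDerivAt s).continuousAt

lemma convexOn_primitive (hf : IsSubcritical n f F) : ConvexOn ℝ univ F := by
  have hderiv : deriv F = f := funext fun s => (hf.hasDerivAt s).deriv
  exact (hderiv ▸ hf.mono).convexOn_univ_of_deriv fun s => (hf.hasDerivAt s).differentiableAt

lemma add_mul_le (hf : IsSubcritical n f F) (x y : ℝ) : F x + f x * (y - x) ≤ F y := by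
  rcases lt_trichotomy x y with h | rfl | h
  · have hslope := hf.convexOn_primitive.le_slope_of_hasDerivAt (mem_univ x) (mem_univ y) h
      (hf.hasDerivAt x)
    rw [slope_def_field, le_div_iff₀ (sub_pos.2 h)] at hslope
    linarith
  · simp
  · have hslope := hf.convexOn_primitive.slope_le_of_hasDerivAt (mem_univ y) (mem_univ x) h
      (hf.hasDerivAt x)
    rw [slope_def_field, div_le_iff₀ (sub_pos.2 h)] at hslope
    linarith

lemma primitive_mono (hf : IsSubcritical n f F) : Monotone F :=
  monotone_of_hasDerivAt_nonneg hf.hasDerivAt hf.nonneg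

lemma lineExtend_picard_nonneg (hf : IsSubcritical n f F) (u : C(I, ℝ)) :
    ∀ r ∈ I, 0 ≤ lineExtend (picard n f u) r :=
  (isNeumannSol_picard n f u).nonneg fun r _ => hf.nonneg (lineExtend u r)

lemma stepEnergy_picard_add_le (hf : IsSubcritical n f F) (u : C(I, ℝ)) :
    stepEnergy n f F (picard n f u) + 1 / 2 * h1NormSq n
      (fun r => lineExtend (picard n f (picard n f u)) r - lineExtend (picard n f u) r)
      (fun r => picardDeriv n f (picard n f u) r - picardDeriv n f u r) ≤ stepEnergy n f F u :=
  energy_add_le_of_isNeumannSol f.continuous hf.continuous_primitive hf.add_mul_le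
    (isNeumannSol_picard n f u).toIsC1On (isNeumannSol_picard n f (picard n f u))

lemma antitone_stepEnergy_iterate (hf : IsSubcritical n f F) (u : C(I, ℝ)) :
    Antitone fun m => stepEnergy n f F ((picard n f)^[m] u) :=
  antitone_nat_of_succ_le fun m => by
    rw [Function.iterate_succ_apply']
    exact (le_add_of_nonneg_right (mul_nonneg one_half_pos.le h1NormSq_nonneg)).trans
      (hf.stepEnergy_picard_add_le _)

lemma picard_eq_of_stepEnergy_le (hf : IsSubcritical n f F) {u : C(I, ℝ)}
    (h : stepEnergy n f F u ≤ stepEnergy n f F (picard n f u)) :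
    picard n f (picard n f u) = picard n f u := by
  have hw := (isNeumannSol_picard n f (picard n f u)).toIsC1On.sub
    (isNeumannSol_picard n f u).toIsC1On
  have hw1 := hw.continuousOn_deriv
  have hzero := eq_zero_of_radialInt_nonpos (n := n)
    (g := fun r => (picardDeriv n f (picard n f u) r - picardDeriv n f u r) ^ 2 +
      (lineExtend (picard n f (picard n f u)) r - lineExtend (picard n f u) r) ^ 2)
    (by fun_prop) (fun r _ => by positivity)
    (show h1NormSq n _ _ ≤ 0 by linarith [hf.stepEnergy_picard_add_le u])
  ext r
  have hsq := hzero r.2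
  simp only [lineExtend_coe, Pi.zero_apply] at hsq
  exact sub_eq_zero.1 (pow_eq_zero_iff two_ne_zero |>.1
    (le_antisymm (by linarith [sq_nonneg (picardDeriv n f (picard n f u) r - picardDeriv n f u r)])
      (sq_nonneg _)))

end IsSubcritical

section Compactness

lemma exists_tendsto_subseq_of_lipschitz {u : ℕ → C(I, ℝ)} {M K : ℝ}
    (hM : ∀ m r, |u m r| ≤ M) (hK : ∀ m r s, |u m r - u m s| ≤ K * dist r s) :
    ∃ (w : C(I, ℝ)) (φ : ℕ → ℕ), StrictMono φ ∧ Tendsto (u ∘ φ) atTop (𝓝 w) := by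
  let e := ContinuousMap.isometryEquivBoundedOfCompact I ℝ
  have hequi : Equicontinuous ((↑) : range (fun m => e (u m)) → I → ℝ) := by
    refine Metric.equicontinuous_of_continuity_modulus (fun t => K * t)
      ((continuous_const.mul continuous_id).tendsto' 0 0 (mul_zero K)) _ ?_
    rintro r s ⟨_, m, rfl⟩
    exact hK m r s
  have hcompact := BoundedContinuousFunction.arzela_ascoli (Icc (-M) M) isCompact_Icc
    (range fun m => e (u m)) (by rintro _ r ⟨m, rfl⟩; exact abs_le.1 (hM m r)) hequi
  obtain ⟨g, -, φ, hφ, hg⟩ := hcompact.tendsto_subseq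
    (fun m => subset_closure (mem_range_self m) : ∀ m, e (u m) ∈ _)
  refine ⟨e.symm g, φ, hφ, ((e.symm.continuous.tendsto g).comp hg).congr fun m => ?_⟩
  simp

end Compactness

lemma exists_decay_exponent {n : ℕ} {p : ℝ} (hp : 2 < p) (hpn : (n - 1) * (p - 2) < 4) :
    ∃ β : ℝ, 0 < β ∧ n ≤ β + 1 ∧ β * (p - 2) / 2 < min (2 : ℝ) (n + 1) := by
  have hp2 : 0 < p - 2 := sub_pos.2 hp
  refine ⟨max (n - 1) (1 / (p - 2)), lt_max_of_lt_right (one_div_pos.2 hp2), ?_, ?_⟩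
  · linarith [le_max_left (n - 1 : ℝ) (1 / (p - 2))]
  · rw [max_mul_of_nonneg _ _ hp2.le, one_div_mul_cancel hp2.ne', div_lt_iff₀ two_pos, max_lt_iff]
    rcases n.eq_zero_or_pos with rfl | hn
    · norm_num
      linarith
    · have hn1 : (1 : ℝ) ≤ n := mod_cast hn
      rw [min_eq_left (by linarith)]
      constructor <;> linarith

namespace IsSubcritical

variable {n : ℕ} {f : C(ℝ, ℝ)} {F : ℝ → ℝ} {ℓ : ℝ} {u : C(I, ℝ)}

lemma exists_h1NormSq_picard_le (hf : IsSubcritical n f F) (E : ℝ) :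
    ∃ A, ∀ u, stepEnergy n f F u ≤ E →
    ℓ ≤ stepEnergy n f F (picard n f u) →
    h1NormSq n (lineExtend (picard n f u)) (picardDeriv n f u) ≤ A := by
  obtain ⟨μ, c, hμ, hAR⟩ := hf.superquadratic
  have hμ2 : 0 < μ - 2 := by linarith
  have hcoeff : 0 < (μ - 2) / (4 * μ) := div_pos hμ2 (by linarith)
  have hcoeff' : 0 ≤ 1 / (μ * (μ - 2)) := by positivity
  refine ⟨(E + 1 / (μ * (μ - 2)) * (2 * (E - ℓ)) + c / (n + 1)) / ((μ - 2) / (4 * μ)),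
    fun u hE hℓ => ?_⟩
  rw [le_div_iff₀ hcoeff, mul_comm]
  have hdecay := hf.stepEnergy_picard_add_le u
  have hbound := h1NormSq_le_of_ambrosettiRabinowitz hμ f.continuous hf.continuous_primitive hAR
    (isNeumannSol_picard n f u).toIsC1On (hf.lineExtend_picard_nonneg u)
    (isNeumannSol_picard n f (picard n f u))
  rw [← stepEnergy] at hbound
  generalize h1NormSq n (fun r => lineExtend (picard n f (picard n f u)) r -
    lineExtend (picard n f u) r) _ = D at hdecay hbound
  have hD : D ≤ 2 * (E - ℓ) := by linarith
  linarith [mul_le_mul_of_nonneg_left hD hcoeff']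

lemma exists_h1NormSq_picard_iterate_le (hf : IsSubcritical n f F)
    (hℓ : ∀ m, ℓ ≤ stepEnergy n f F ((picard n f)^[m] u)) :
    ∃ A, ∀ m, h1NormSq n (lineExtend (picard n f ((picard n f)^[m] u)))
      (picardDeriv n f ((picard n f)^[m] u)) ≤ A := by
  obtain ⟨A, hA⟩ := hf.exists_h1NormSq_picard_le (ℓ := ℓ) (stepEnergy n f F u)
  refine ⟨A, fun m => hA ((picard n f)^[m] u) ?_ ?_⟩
  · simpa only [Function.iterate_zero, id] using hf.antitone_stepEnergy_iterate u m.zero_le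
  · simpa only [← Function.iterate_succ_apply'] using hℓ (m + 1)

lemma exists_picard_iterate_le (hf : IsSubcritical n f F)
    (hℓ : ∀ m, ℓ ≤ stepEnergy n f F ((picard n f)^[m] u)) :
    ∃ M, ∀ m, ∀ r ∈ I, lineExtend (picard n f ((picard n f)^[m] u)) r ≤ M := by
  obtain ⟨p, C, hp, hpn, hgrowth⟩ := hf.growth
  have hC : 0 ≤ C := by simpa using (hf.nonneg 1).trans (hgrowth 1 zero_le_one)
  obtain ⟨β, hβ, hβn, hβp⟩ := exists_decay_exponent hp hpn
  obtain ⟨A, hA⟩ := hf.exists_h1NormSq_picard_iterate_le hℓ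
  have hβ' : (0 : ℝ) < n + 2 + 1 / β := by positivity
  have hdecay : ∀ m, ∀ r ∈ Ioc (0 : ℝ) 1, r ^ β * lineExtend (picard n f ((picard n f)^[m] u)) r ^ 2
      ≤ (n + 2 + 1 / β) * A := fun m r hr =>
    ((isNeumannSol_picard n f _).toIsC1On.rpow_mul_sq_le hβ hβn hr).trans
      (mul_le_mul_of_nonneg_left (hA m) hβ'.le)
  obtain ⟨L, hL⟩ := exists_le_add_half hp hC hβ.le hβp
    (mul_nonneg hβ'.le (h1NormSq_nonneg.trans (hA 0)))
  set M := max ‖picard n f u‖ (2 * L)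
  refine ⟨M, fun m => ?_⟩
  induction m with
  | zero =>
    intro r hr
    rw [lineExtend_of_mem _ hr]
    exact ((le_abs_self _).trans ((picard n f u).norm_coe_le_norm ⟨r, hr⟩)).trans (le_max_left _ _)
  | succ m ih =>
    intro r hr
    have hdecay' := hdecay (m + 1)
    rw [Function.iterate_succ_apply'] at hdecay' ⊢
    have hhalf := hL hgrowth (hf.lineExtend_picard_nonneg _) ih (hdecay m)
      (isNeumannSol_picard n f _) (hf.lineExtend_picard_nonneg _) hdecay' r hr
    linarith [le_max_right ‖picard n f u‖ (2 * L)]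

lemma abs_picard_sub_le (hf : IsSubcritical n f F) {M : ℝ} (hM : ∀ r ∈ I, lineExtend u r ≤ M)
    (hM' : ∀ r ∈ I, lineExtend (picard n f u) r ≤ M) (r s : I) :
    |picard n f u r - picard n f u s| ≤ (M + f M) * dist r s := by
  have hw := isNeumannSol_picard n f u
  have hderiv := hw.abs_deriv_le (K := M + f M) fun t ht => by
    have h1 := hf.mono (hM t ht)
    have h2 := hf.nonneg (lineExtend u t)
    have h3 := hf.lineExtend_picard_nonneg u t ht
    have h4 := hM' t ht
    rw [abs_le]
    constructor <;> linarith
  have hle := (convex_Icc (0 : ℝ) 1).norm_image_sub_le_of_norm_hasDerivWithin_le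
    hw.hasDerivWithinAt hderiv s.2 r.2
  rw [lineExtend_coe, lineExtend_coe] at hle
  exact hle

lemma exists_tendsto_subseq_iterate (hf : IsSubcritical n f F)
    (hℓ : ∀ m, ℓ ≤ stepEnergy n f F ((picard n f)^[m] u)) :
    ∃ (w : C(I, ℝ)) (φ : ℕ → ℕ), Tendsto φ atTop atTop ∧
      Tendsto (fun k => (picard n f)^[φ k] u) atTop (𝓝 w) := by
  obtain ⟨M, hM⟩ := hf.exists_picard_iterate_le hℓ
  simp only [← Function.iterate_succ_apply' (picard n f)] at hM
  have hbdd : ∀ m r, |(picard n f)^[m + 2] u r| ≤ M := fun m r => by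
    have hnonneg := hf.lineExtend_picard_nonneg ((picard n f)^[m + 1] u) r r.2
    have hle := hM (m + 1) r r.2
    rw [← Function.iterate_succ_apply' (picard n f)] at hnonneg
    rw [lineExtend_coe] at hnonneg hle
    rwa [abs_of_nonneg hnonneg]
  have hlip : ∀ m r s, |(picard n f)^[m + 2] u r - (picard n f)^[m + 2] u s|
      ≤ (M + f M) * dist r s := fun m r s => by
    have hle := hM (m + 1)
    rw [Function.iterate_succ_apply'] at hle ⊢
    exact hf.abs_picard_sub_le (hM m) hle r s
  obtain ⟨w, φ, hφ, hw⟩ := exists_tendsto_subseq_of_lipschitz hbdd hlip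
  exact ⟨w, fun k => φ k + 2, (tendsto_add_atTop_nat 2).comp hφ.tendsto_atTop, hw⟩

/-- Along a convergent subsequence both the energy and the energy after one more step converge to
the infimum of the energy, so the limit is not moved by the iteration after one step. -/
lemma exists_tendsto_fixedPoint (hf : IsSubcritical n f F)
    (hℓ : ∀ m, ℓ ≤ stepEnergy n f F ((picard n f)^[m] u)) :
    ∃ (w : C(I, ℝ)) (φ : ℕ → ℕ), picard n f w = w ∧
      Tendsto (fun k => (picard n f)^[φ k] u) atTop (𝓝 w) := by
  obtain ⟨w, φ, hφ, hw⟩ := hf.exists_tendsto_subseq_iterate hℓ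
  have hw' : Tendsto (fun k => (picard n f)^[φ k + 1] u) atTop (𝓝 (picard n f w)) := by
    simp only [Function.iterate_succ_apply']
    exact (continuous_picard.tendsto w).comp hw
  have hcont : Continuous (stepEnergy n f F) := continuous_stepEnergy hf.continuous_primitive
  have hlim := tendsto_atTop_ciInf (hf.antitone_stepEnergy_iterate u)
    ⟨ℓ, by rintro _ ⟨m, rfl⟩; exact hℓ m⟩
  have hE := tendsto_nhds_unique ((hcont.tendsto w).comp hw) (hlim.comp hφ)
  have hE' := tendsto_nhds_unique ((hcont.tendsto _).comp hw')
    (hlim.comp ((tendsto_add_atTop_nat 1).comp hφ))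
  exact ⟨picard n f w, fun k => φ k + 1, hf.picard_eq_of_stepEnergy_le (hE.trans hE'.symm).le, hw'⟩

end IsSubcritical

/-! ### Threshold orbits -/

section Threshold

variable {n : ℕ} {f : C(ℝ, ℝ)} {F : ℝ → ℝ} {c : ℝ} {u : C(I, ℝ)}

lemma isOpen_setOf_forall_lt (c : ℝ) : IsOpen {u : C(I, ℝ) | ∀ x, u x < c} := by
  simpa [MapsTo] using ContinuousMap.isOpen_setOfPred_mapsTo (X := I) isCompact_univ
    (isOpen_Iio (a := c))

lemma isOpen_setOf_forall_gt (c : ℝ) : IsOpen {u : C(I, ℝ) | ∀ x, c < u x} := by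
  simpa [MapsTo] using ContinuousMap.isOpen_setOfPred_mapsTo (X := I) isCompact_univ
    (isOpen_Ioi (a := c))

lemma iterate_picard_le_const (hf : Monotone f) (hc : f c = c) {m k : ℕ} (hmk : m ≤ k)
    (h : (picard n f)^[m] u ≤ .const I c) : (picard n f)^[k] u ≤ .const I c := by
  induction k, hmk using Nat.le_induction with
  | base => exact h
  | succ k _ ih =>
    rw [Function.iterate_succ_apply']
    exact (picard_mono hf ih).trans_eq (by rw [picard_const, hc])

lemma const_le_iterate_picard (hf : Monotone f) (hc : f c = c) {m k : ℕ} (hmk : m ≤ k)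
    (h : .const I c ≤ (picard n f)^[m] u) : .const I c ≤ (picard n f)^[k] u := by
  induction k, hmk using Nat.le_induction with
  | base => exact h
  | succ k _ ih =>
    rw [Function.iterate_succ_apply']
    exact le_trans (by rw [picard_const, hc]) (picard_mono hf ih)

lemma not_const_lt_iterate_picard (hf : Monotone f) (hc : f c = c) {j : ℕ}
    (hj : ∀ x, (picard n f)^[j] u x < c) (m : ℕ) : ¬ ∀ x, c < (picard n f)^[m] u x := fun hm => by
  rcases le_total j m with h | h
  · exact (hm 0).not_ge (iterate_picard_le_const hf hc h (fun x => (hj x).le) 0)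
  · exact (hj 0).not_ge (const_le_iterate_picard hf hc h (fun x => (hm x).le) 0)

namespace IsSubcritical

lemma stepEnergy_const (hf : IsSubcritical n f F) (hc : f c = c) :
    stepEnergy n f F (.const I c) = (c ^ 2 / 2 - F c) / (n + 1) := by
  rw [stepEnergy_eq hf.continuous_primitive, ← radialInt_const]
  refine radialInt_congr fun r hr => ?_
  rw [picard_const, hc, lineExtend_of_mem _ hr, ContinuousMap.const_apply, hc]
  ring

lemma neg_le_stepEnergy_of_le_const (hf : IsSubcritical n f F) (hc : f c = c)
    (h : u ≤ .const I c) : -F c / (n + 1) ≤ stepEnergy n f F u := by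
  rw [stepEnergy_eq hf.continuous_primitive, ← radialInt_const]
  have := hf.continuous_primitive
  refine radialInt_mono (by fun_prop) (by fun_prop) fun r hr => ?_
  have hle : lineExtend (picard n f u) r ≤ c := by
    rw [lineExtend_of_mem _ hr]
    exact iterate_picard_le_const (m := 0) hf.mono hc zero_le_one h ⟨r, hr⟩
  linarith [hf.primitive_mono hle,
    mul_nonneg (hf.nonneg (lineExtend u r)) (hf.lineExtend_picard_nonneg u r hr)]

lemma neg_le_stepEnergy_iterate (hf : IsSubcritical n f F) (hc : f c = c) {m : ℕ}
    (h : ∀ x, (picard n f)^[m] u x < c) (k : ℕ) :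
    -F c / (n + 1) ≤ stepEnergy n f F ((picard n f)^[k] u) :=
  (hf.neg_le_stepEnergy_of_le_const hc
    (iterate_picard_le_const hf.mono hc (le_max_right k m) fun x => (h x).le)).trans
    (hf.antitone_stepEnergy_iterate u (le_max_left k m))

/-- The threshold point lies on the boundary of the open set of data whose orbit eventually falls
below `c`; the energy bound passes to the closure of that set. -/
lemma exists_threshold (hf : IsSubcritical n f F) (hc : f c = c) {S : Set C(I, ℝ)}
    (hS : IsPreconnected S) (hlt : ∃ u ∈ S, ∀ x, u x < c) (hgt : ∃ u ∈ S, ∀ x, c < u x) :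
    ∃ u ∈ S, (∀ m, ¬ ∀ x, (picard n f)^[m] u x < c) ∧ (∀ m, ¬ ∀ x, c < (picard n f)^[m] u x) ∧
      ∀ m, -F c / (n + 1) ≤ stepEnergy n f F ((picard n f)^[m] u) := by
  have hiterate : ∀ m, Continuous (picard n f)^[m] := continuous_picard.iterate
  let A : Set C(I, ℝ) := ⋃ m, (picard n f)^[m] ⁻¹' {u | ∀ x, u x < c}
  let B : Set C(I, ℝ) := ⋃ m, (picard n f)^[m] ⁻¹' {u | ∀ x, c < u x}
  have hA : IsOpen A := isOpen_iUnion fun m => (isOpen_setOf_forall_lt c).preimage (hiterate m)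
  have hB : IsOpen B := isOpen_iUnion fun m => (isOpen_setOf_forall_gt c).preimage (hiterate m)
  have hAB : Disjoint A B := by
    rw [Set.disjoint_left]
    intro u hu hu'
    obtain ⟨j, hj⟩ := mem_iUnion.1 hu
    obtain ⟨m, hm⟩ := mem_iUnion.1 hu'
    exact not_const_lt_iterate_picard hf.mono hc hj m hm
  obtain ⟨a, haS, ha⟩ := hlt
  obtain ⟨b, hbS, hb⟩ := hgt
  obtain ⟨u, huS, hucl, huA⟩ : ∃ u ∈ S, u ∈ closure A ∧ u ∉ A := by
    by_contra! h
    have hSA := hS.subset_of_closure_inter_subset hA ⟨a, haS, mem_iUnion.2 ⟨0, ha⟩⟩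
      fun u hu => h u hu.2 hu.1
    exact hAB.notMem_of_mem_left (hSA hbS) (mem_iUnion.2 ⟨0, hb⟩)
  refine ⟨u, huS, fun m h => huA (mem_iUnion.2 ⟨m, h⟩), fun m h => ?_, fun m => ?_⟩
  · exact (hAB.closure_left hB).notMem_of_mem_left hucl (mem_iUnion.2 ⟨m, h⟩)
  · have hcont : Continuous fun v => stepEnergy n f F ((picard n f)^[m] v) :=
      (continuous_stepEnergy hf.continuous_primitive).comp (hiterate m)
    refine closure_minimal (fun v hv => ?_) (isClosed_le continuous_const hcont) hucl
    obtain ⟨j, hj⟩ := mem_iUnion.1 hv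
    exact hf.neg_le_stepEnergy_iterate hc hj m

lemma exists_nonconstant_fixedPoint (hf : IsSubcritical n f F) (hc : f c = c) {S K : Set C(I, ℝ)}
    (hS : IsPreconnected S) (hlt : ∃ u ∈ S, ∀ x, u x < c) (hgt : ∃ u ∈ S, ∀ x, c < u x)
    (hE : ∀ u ∈ S, stepEnergy n f F u < (c ^ 2 / 2 - F c) / (n + 1))
    (hK : IsClosed K) (hmaps : MapsTo (picard n f) K K) (hSK : S ⊆ K) :
    ∃ w ∈ K, picard n f w = w ∧ ∃ x y, w x ≠ w y := by
  obtain ⟨u, hu, hnlt, hngt, hℓ⟩ := hf.exists_threshold hc hS hlt hgt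
  obtain ⟨w, φ, hw, hφ⟩ := hf.exists_tendsto_fixedPoint hℓ
  have hge : ∃ x, c ≤ w x := by
    by_contra! h
    obtain ⟨k, hk⟩ := (hφ.eventually ((isOpen_setOf_forall_lt c).mem_nhds h)).exists
    exact hnlt _ hk
  have hle : ∃ x, w x ≤ c := by
    by_contra! h
    obtain ⟨k, hk⟩ := (hφ.eventually ((isOpen_setOf_forall_gt c).mem_nhds h)).exists
    exact hngt _ hk
  refine ⟨w, hK.mem_of_tendsto hφ (.of_forall fun k => hmaps.iterate _ (hSK hu)), hw, ?_⟩
  by_contra! hconst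
  have hwc : w = .const I c := by
    obtain ⟨x, hx⟩ := hge
    obtain ⟨y, hy⟩ := hle
    ext z
    exact le_antisymm ((hconst z y).trans_le hy) (hx.trans_eq (hconst x z))
  have hlim := ((continuous_stepEnergy (n := n) (f := f) hf.continuous_primitive).tendsto w).comp hφ
  have hlow := le_of_tendsto hlim (.of_forall fun k =>
    hf.antitone_stepEnergy_iterate u (Nat.zero_le (φ k)))
  rw [hwc, hf.stepEnergy_const hc] at hlow
  exact (hE u hu).not_ge hlow

end IsSubcritical

end Threshold

/-! ### Instability of the constant solution -/

section Instability

variable {n : ℕ} {f : C(ℝ, ℝ)} {F : ℝ → ℝ} {c d lam δ : ℝ} {z χ : ℝ → ℝ}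

lemma exists_forall_quadratic_le {f : ℝ → ℝ} (hF : ∀ s, HasDerivAt F (f s) s)
    (hd : HasDerivAt f d c) (hlam : lam < d) :
    ∃ δ > 0, ∀ y, |y| ≤ δ → F c + f c * y + lam / 2 * y ^ 2 ≤ F (c + y) := by
  have hslope : ∀ᶠ x in 𝓝[≠] c, lam < slope f c x := hd.tendsto_slope.eventually_const_lt hlam
  rw [eventually_nhdsWithin_iff, Metric.eventually_nhds_iff] at hslope
  obtain ⟨δ, hδ, hslope⟩ := hslope
  have hsign : ∀ x, |x| < δ → 0 ≤ (f (c + x) - f c - lam * x) * x := fun x hx => by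
    rcases eq_or_ne x 0 with rfl | hx0
    · simp
    · have hlt := hslope (y := c + x) (by simpa using hx) (by simpa using hx0)
      rw [slope_def_field, add_sub_cancel_left] at hlt
      have hfactor : (f (c + x) - f c - lam * x) * x = ((f (c + x) - f c) / x - lam) * x ^ 2 := by
        field_simp
      exact hfactor ▸ mul_nonneg (sub_nonneg.2 hlt.le) (sq_nonneg x)
  refine ⟨δ / 2, half_pos hδ, fun y hy => ?_⟩
  have hderiv : ∀ t, HasDerivAt
      (fun t => F (c + t * y) - f c * (t * y) - lam / 2 * (t * y) ^ 2)
      ((f (c + t * y) - f c - lam * (t * y)) * y) t := fun t => by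
    have hty : HasDerivAt (fun t => t * y) y t := by simpa using (hasDerivAt_id t).mul_const y
    refine ((((hF (c + t * y)).comp t (hty.const_add c)).sub (hty.const_mul (f c))).sub
      ((hty.pow 2).const_mul (lam / 2))).congr_deriv ?_
    push_cast
    ring
  have hmono := monotoneOn_of_hasDerivWithinAt_nonneg (convex_Icc (0 : ℝ) 1)
    (fun t _ => (hderiv t).continuousAt.continuousWithinAt)
    (fun t _ => (hderiv t).hasDerivWithinAt) fun t ht => ?_
  · have hle := hmono unitInterval.zero_mem unitInterval.one_mem zero_le_one
    simp only [zero_mul, one_mul, add_zero, mul_zero, sub_zero, ne_eq, two_ne_zero,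
      not_false_eq_true, zero_pow] at hle
    linarith
  · rw [interior_Icc] at ht
    have hty : |t * y| < δ := by
      rw [abs_mul, abs_of_pos ht.1]
      linarith [mul_le_of_le_one_left (abs_nonneg y) ht.2.le]
    have hnonneg := hsign _ hty
    rw [mul_comm t y, ← mul_assoc, mul_comm y t] at hnonneg
    exact nonneg_of_mul_nonneg_left hnonneg ht.1

/-- The linear term of the expansion of the energy at `c` is killed by `f c = c` and the zero mean
of `z`; in the quadratic term, `lam < lam'` beats the Rayleigh quotient of `z`. -/
lemma IsMonotoneTestFunction.energy_add_lt (hz : IsMonotoneTestFunction n lam z χ)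
    (hF : Continuous F) {lam' s t : ℝ} (hlam : 1 < lam) (hlam' : lam < lam')
    (hFc : ∀ y, |y| ≤ δ → F c + c * y + lam' / 2 * y ^ 2 ≤ F (c + y)) (ht : t ≠ 0)
    (hst : ∀ r ∈ I, |s - c + t * z r| ≤ δ) :
    energy n F (fun r => s + t * z r) (fun r => t * χ r) < (c ^ 2 / 2 - F c) / (n + 1) := by
  have hz0 := hz.continuousOn
  have hz1 := hz.continuousOn_deriv
  have ht2 : 0 < t ^ 2 / 2 := by positivity
  have hquad : t ^ 2 / 2 * radialInt n (fun r => χ r ^ 2) +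
      (1 - lam') * t ^ 2 / 2 * radialInt n (fun r => z r ^ 2) < 0 := by
    linarith [mul_le_mul_of_nonneg_left hz.deriv_sq_le ht2.le,
      mul_pos (mul_pos ht2 (sub_pos.2 hlam')) hz.sq_pos]
  have hconst : c ^ 2 / 2 - F c + (1 - lam') / 2 * (s - c) ^ 2 ≤ c ^ 2 / 2 - F c :=
    add_le_of_nonpos_right (mul_nonpos_of_nonpos_of_nonneg (by linarith) (sq_nonneg _))
  calc energy n F (fun r => s + t * z r) (fun r => t * χ r)
      ≤ radialInt n (fun r => (t ^ 2 / 2 * χ r ^ 2 + (1 - lam') * t ^ 2 / 2 * z r ^ 2) +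
          ((1 - lam') * (s - c) * t * z r +
            (c ^ 2 / 2 - F c + (1 - lam') / 2 * (s - c) ^ 2))) := by
        refine radialInt_mono (by fun_prop) (by fun_prop) fun r hr => ?_
        have hle := hFc _ (hst r hr)
        rw [show c + (s - c + t * z r) = s + t * z r by ring] at hle
        linear_combination hle
    _ = (t ^ 2 / 2 * radialInt n (fun r => χ r ^ 2) +
          (1 - lam') * t ^ 2 / 2 * radialInt n (fun r => z r ^ 2)) +
          (c ^ 2 / 2 - F c + (1 - lam') / 2 * (s - c) ^ 2) / (n + 1) := by
        rw [radialInt_add (by fun_prop) (by fun_prop), radialInt_add (by fun_prop) (by fun_prop),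
          radialInt_add (by fun_prop) (by fun_prop), radialInt_const_mul, radialInt_const_mul,
          radialInt_const_mul, radialInt_const, hz.mean_eq_zero, mul_zero, zero_add]
    _ < (c ^ 2 / 2 - F c + (1 - lam') / 2 * (s - c) ^ 2) / (n + 1) :=
        add_lt_of_neg_left _ hquad
    _ ≤ (c ^ 2 / 2 - F c) / (n + 1) := by gcongr

namespace IsSubcritical

lemma exists_energy_lt (hf : IsSubcritical n f F) (hc : f c = c) (hd : HasDerivAt f d c)
    (hlam : 1 < lam) (hlamd : lam < d) (hz : IsMonotoneTestFunction n lam z χ) :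
    ∃ δ > 0, ∃ t > 0, ∀ τ, |τ| = t → (∀ r ∈ I, |τ * z r| < δ) ∧ ∀ s, |s - c| ≤ δ →
      energy n F (fun r => s + τ * z r) (fun r => τ * χ r) < (c ^ 2 / 2 - F c) / (n + 1) := by
  obtain ⟨lam', hlam', hlamd'⟩ := exists_between hlamd
  obtain ⟨δ, hδ, hFc⟩ := exists_forall_quadratic_le hf.hasDerivAt hd hlamd'
  rw [hc] at hFc
  obtain ⟨B, hB⟩ := isCompact_Icc.exists_bound_of_continuousOn hz.continuousOn
  have hB0 : 0 ≤ B := (norm_nonneg _).trans (hB 0 unitInterval.zero_mem)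
  refine ⟨δ / 2, half_pos hδ, δ / 2 / (B + 1), by positivity, fun τ hτ => ?_⟩
  have hsmall : ∀ r ∈ I, |τ * z r| < δ / 2 := fun r hr => by
    rw [abs_mul, hτ, div_mul_eq_mul_div, div_lt_iff₀ (by positivity)]
    exact mul_lt_mul_of_pos_left ((hB r hr).trans_lt (lt_add_one B)) (half_pos hδ)
  have hτ0 : τ ≠ 0 := abs_pos.1 (hτ ▸ by positivity)
  refine ⟨hsmall, fun s hs => hz.energy_add_lt hf.continuous_primitive hlam hlam' hFc hτ0 ?_⟩
  exact fun r hr => (abs_add_le _ _).trans (by linarith [hsmall r hr])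

lemma stepEnergy_le_energy (hf : IsSubcritical n f F) {u : C(I, ℝ)} (hz : IsC1On z χ)
    (hu : ∀ x : I, u x = z x) : stepEnergy n f F u ≤ energy n F z χ := by
  have heq : EqOn (lineExtend u) z I := fun r hr => by
    rw [lineExtend_of_mem _ hr]
    exact hu ⟨r, hr⟩
  have hC1 : IsC1On (lineExtend u) χ :=
    { hz with hasDerivWithinAt := fun r hr => (hz.hasDerivWithinAt r hr).congr heq (heq hr) }
  have hle := energy_add_le_of_isNeumannSol f.continuous hf.continuous_primitive hf.add_mul_le hC1
    (isNeumannSol_picard n f u)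
  calc stepEnergy n f F u
      ≤ energy n F (lineExtend u) χ :=
        (le_add_of_nonneg_right (mul_nonneg one_half_pos.le h1NormSq_nonneg)).trans hle
    _ = energy n F z χ := radialInt_congr fun r hr => by simp only [heq hr]

lemma exists_nonconstant_fixedPoint_of_energy_lt (hf : IsSubcritical n f F) (hc : f c = c)
    (hz : IsC1On z χ) (hδ : 0 < δ) (hsmall : ∀ r ∈ I, |z r| < δ)
    (hE : ∀ s, |s - c| ≤ δ → energy n F (fun r => s + z r) χ < (c ^ 2 / 2 - F c) / (n + 1))
    {K : Set C(I, ℝ)} (hK : IsClosed K) (hmaps : MapsTo (picard n f) K K)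
    (hzK : ∀ u : C(I, ℝ), ∀ s, (∀ x : I, u x = s + z x) → u ∈ K) :
    ∃ w ∈ K, picard n f w = w ∧ ∃ x y, w x ≠ w y := by
  let ψ : C(I, ℝ) := ⟨domRestrict I z, hz.continuousOn.domRestrict⟩
  let γ : ℝ → C(I, ℝ) := fun s => .const I s + ψ
  have hγ : ∀ s, ∀ x : I, γ s x = s + z x := fun s x => rfl
  refine hf.exists_nonconstant_fixedPoint hc (S := γ '' Icc (c - δ) (c + δ))
    (isPreconnected_Icc.image γ (by fun_prop))
    ⟨_, mem_image_of_mem γ (left_mem_Icc.2 (by linarith)), fun x => ?_⟩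
    ⟨_, mem_image_of_mem γ (right_mem_Icc.2 (by linarith)), fun x => ?_⟩ ?_ hK hmaps ?_
  · linarith [hγ (c - δ) x, (abs_lt.1 (hsmall x x.2)).2]
  · linarith [hγ (c + δ) x, (abs_lt.1 (hsmall x x.2)).1]
  · rintro _ ⟨s, hs, rfl⟩
    have hC1 : IsC1On (fun r => s + z r) χ :=
      ⟨fun r hr => (hz.hasDerivWithinAt r hr).const_add s, hz.continuousOn_deriv⟩
    exact (hf.stepEnergy_le_energy hC1 (hγ s)).trans_lt
      (hE s (abs_le.2 ⟨by linarith [hs.1], by linarith [hs.2]⟩))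
  · rintro _ ⟨s, -, rfl⟩
    exact hzK _ s (hγ s)

theorem exists_monotone_and_antitone_fixedPoint (hf : IsSubcritical n f F) (hc : f c = c)
    (hd : HasDerivAt f d c) (hlam : 1 < lam) (hlamd : lam < d)
    (hz : IsMonotoneTestFunction n lam z χ) :
    (∃ w : C(I, ℝ), Monotone w ∧ picard n f w = w ∧ ∃ x y, w x ≠ w y) ∧
      ∃ w : C(I, ℝ), Antitone w ∧ picard n f w = w ∧ ∃ x y, w x ≠ w y := by
  obtain ⟨δ, hδ, t, ht, hpath⟩ := hf.exists_energy_lt hc hd hlam hlamd hz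
  have hC1 : ∀ τ, IsC1On (fun r => τ * z r) (fun r => τ * χ r) := fun τ =>
    ⟨fun r hr => (hz.hasDerivWithinAt r hr).const_mul τ, hz.continuousOn_deriv.const_mul τ⟩
  have hmono : Monotone fun x : I => z x := fun x y hxy => hz.monotone x.2 y.2 hxy
  constructor
  · obtain ⟨hsmall, hE⟩ := hpath t (abs_of_pos ht)
    refine hf.exists_nonconstant_fixedPoint_of_energy_lt hc (hC1 t) hδ hsmall hE
      (isClosed_monotone.preimage continuous_coeFun)
      (fun u => monotone_picard_apply hf.mono) fun u s hu x y hxy => ?_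
    rw [hu, hu]
    gcongr
    exact hmono hxy
  · obtain ⟨hsmall, hE⟩ := hpath (-t) (by rw [abs_neg, abs_of_pos ht])
    refine hf.exists_nonconstant_fixedPoint_of_energy_lt hc (hC1 (-t)) hδ hsmall hE
      (isClosed_antitone.preimage continuous_coeFun)
      (fun u => antitone_picard_apply hf.mono) fun u s hu x y hxy => ?_
    rw [hu, hu]
    linarith [mul_le_mul_of_nonneg_left (hmono hxy) ht.le]

end IsSubcritical

end Instability

/-! ### Strict positivity of monotone solutions -/

section Positivity

variable {n : ℕ} {h u v : ℝ → ℝ}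

lemma IsC1On.monotoneOn_exp_mul (hu : IsC1On u v) {L a : ℝ} (ha : 0 ≤ a)
    (hL : ∀ r ∈ Ioo a 1, -(L * u r) ≤ v r) :
    MonotoneOn (fun r => Real.exp (L * r) * u r) (Icc a 1) := by
  have : ContinuousOn u (Icc a 1) := hu.continuousOn.mono (Icc_subset_Icc_left ha)
  refine monotoneOn_of_hasDerivWithinAt_nonneg
    (f' := fun r => Real.exp (L * r) * (L * u r + v r)) (convex_Icc a 1) (by fun_prop) ?_ ?_ <;>
    rw [interior_Icc] <;> intro r hr
  · have hexp : HasDerivAt (fun r => Real.exp (L * r)) (Real.exp (L * r) * L) r := by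
      simpa using ((hasDerivAt_id r).const_mul L).exp
    exact ((hexp.mul (hu.hasDerivAt ⟨ha.trans_lt hr.1, hr.2⟩)).congr_deriv
      (by ring)).hasDerivWithinAt
  · exact mul_nonneg (Real.exp_pos _).le (by linarith [hL r hr])

namespace IsNeumannSol

lemma flux_sub_le (hs : IsNeumannSol n h u v) {a b M : ℝ} (ha : 0 ≤ a) (hab : a ≤ b) (hb : b ≤ 1)
    (hM : ∀ x ∈ Ioo a b, x ^ n * (u x - h x) ≤ M) :
    b ^ n * v b - a ^ n * v a ≤ M * (b - a) := by
  have hderiv : ∀ x ∈ Ioo a b, HasDerivAt (fun x => x ^ n * v x) (x ^ n * (u x - h x)) x :=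
    fun x hx => hs.hasDerivAt_flux x ⟨ha.trans_lt hx.1, hx.2.trans_le hb⟩
  refine (convex_Icc a b).image_sub_le_mul_sub_of_deriv_le (f := fun x => x ^ n * v x)
    (hs.continuousOn_flux.mono (Icc_subset_Icc ha hb)) ?_ ?_ a (left_mem_Icc.2 hab) b
    (right_mem_Icc.2 hab) hab <;> rw [interior_Icc]
  · exact fun x hx => (hderiv x hx).differentiableAt.differentiableWithinAt
  · exact fun x hx => (hderiv x hx).deriv.trans_le (hM x hx)

lemma deriv_le_self_of_monotoneOn (hs : IsNeumannSol n h u v) (hh : ∀ r ∈ I, 0 ≤ h r)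
    (hu : MonotoneOn u I) {r : ℝ} (hr : r ∈ Ioo (0 : ℝ) 1) : v r ≤ u r := by
  have hrI := Ioo_subset_Icc_self hr
  have hur := hs.nonneg hh r hrI
  have hle := hs.flux_sub_le (M := r ^ n * u r) le_rfl hr.1.le hr.2.le fun x hx => by
    have hxI : x ∈ I := ⟨hx.1.le, hx.2.le.trans hr.2.le⟩
    exact mul_le_mul_of_nonneg (pow_le_pow_left₀ hx.1.le hx.2.le n)
      (by linarith [hh x hxI, hu hxI hrI hx.2.le]) (pow_nonneg hx.1.le n) hur
  rw [hs.flux_zero, sub_zero, sub_zero, mul_assoc] at hle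
  exact (le_of_mul_le_mul_left hle (pow_pos hr.1 n)).trans (mul_le_of_le_one_right hur hr.2.le)

lemma neg_flux_le_of_antitoneOn (hs : IsNeumannSol n h u v) (hh : ∀ r ∈ I, 0 ≤ h r)
    (hu : AntitoneOn u I) {r : ℝ} (hr : r ∈ I) : -(r ^ n * v r) ≤ u r := by
  have hur := hs.nonneg hh r hr
  have hle := hs.flux_sub_le (M := u r) hr.1 hr.2 le_rfl fun x hx => by
    have hxI : x ∈ I := ⟨hr.1.trans hx.1.le, hx.2.le⟩
    calc x ^ n * (u x - h x)
        ≤ x ^ n * u r := by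
          gcongr
          · exact pow_nonneg hxI.1 n
          · linarith [hh x hxI, hu hr hxI hx.1.le]
      _ ≤ u r := mul_le_of_le_one_left hur (pow_le_one₀ hxI.1 hxI.2)
  rw [hs.flux_one, zero_sub] at hle
  exact hle.trans (mul_le_of_le_one_right hur (by linarith [hr.1]))

lemma pos_of_monotoneOn (hs : IsNeumannSol n h u v) (hh : ∀ r ∈ I, 0 ≤ h r)
    (hu : MonotoneOn u I) (hpos : ∃ r ∈ I, 0 < u r) : ∀ r ∈ I, 0 < u r := by
  obtain ⟨x, hx, hux⟩ := hpos
  have hexp := hs.neg.monotoneOn_exp_mul (L := -1) le_rfl fun r hr => by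
    linarith [hs.deriv_le_self_of_monotoneOn hh hu hr]
  have hle := hexp unitInterval.zero_mem hx hx.1
  simp only [mul_zero, Real.exp_zero, one_mul, mul_neg] at hle
  have hu0 : 0 < u 0 := (mul_pos (Real.exp_pos (-1 * x)) hux).trans_le (neg_le_neg_iff.1 hle)
  exact fun r hr => hu0.trans_le (hu unitInterval.zero_mem hr hr.1)

lemma pos_of_antitoneOn (hs : IsNeumannSol n h u v) (hh : ∀ r ∈ I, 0 ≤ h r)
    (hu : AntitoneOn u I) (hpos : ∃ r ∈ I, 0 < u r) : ∀ r ∈ I, 0 < u r := by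
  obtain ⟨a, ha, hua⟩ : ∃ a ∈ Ioo (0 : ℝ) 1, 0 < u a := by
    obtain ⟨x, hx, hux⟩ := hpos
    have hu0 : 0 < u 0 := hux.trans_le (hu unitInterval.zero_mem hx hx.1)
    have htendsto : Tendsto u (𝓝[>] 0) (𝓝 (u 0)) := by
      rw [← nhdsWithin_Ioo_eq_nhdsGT one_pos]
      exact (hs.continuousOn 0 unitInterval.zero_mem).mono Ioo_subset_Icc_self
    exact ((htendsto.eventually_const_lt hu0).and (Ioo_mem_nhdsGT one_pos)).exists.imp
      fun _ => And.symm
  have hexp := hs.monotoneOn_exp_mul (L := (a ^ n)⁻¹) ha.1.le fun r hr => by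
    have hrI : r ∈ I := ⟨(ha.1.trans hr.1).le, hr.2.le⟩
    have hur := hs.nonneg hh r hrI
    rw [neg_le, inv_mul_eq_div, le_div_iff₀ (pow_pos ha.1 n)]
    rcases le_total 0 (v r) with hv | hv
    · exact (mul_nonpos_of_nonpos_of_nonneg (neg_nonpos.2 hv) (pow_pos ha.1 n).le).trans hur
    · calc -v r * a ^ n ≤ -v r * r ^ n :=
            mul_le_mul_of_nonneg_left (pow_le_pow_left₀ ha.1.le hr.1.le n) (neg_nonneg.2 hv)
        _ = -(r ^ n * v r) := by ring
        _ ≤ u r := hs.neg_flux_le_of_antitoneOn hh hu hrI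
  have hle := hexp (left_mem_Icc.2 ha.2.le) (right_mem_Icc.2 ha.2.le) ha.2.le
  have hu1 : 0 < u 1 :=
    pos_of_mul_pos_right ((mul_pos (Real.exp_pos _) hua).trans_le hle) (Real.exp_pos _).le
  exact fun r hr => hu1.trans_le (hu hr unitInterval.one_mem hr.2)

end IsNeumannSol

end Positivity

/-! ### Classical radial solutions -/

section RadialSolution

variable {n : ℕ} {f h u v : ℝ → ℝ}

/-- `u` is a positive, nonconstant, classical radial solution of `-Δu + u = f(u)` in the unit ball
of `ℝ^N` with homogeneous Neumann boundary conditions. -/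
def IsPosNonconstRadialSol (N : ℕ) (f u : ℝ → ℝ) : Prop :=
  ∃ u' u'' : ℝ → ℝ,
    (∀ r ∈ I, HasDerivWithinAt u (u' r) I r) ∧
    ContinuousOn u' I ∧
    (∀ r ∈ Ioo (0 : ℝ) 1, HasDerivAt u' (u'' r) r) ∧
    u' 0 = 0 ∧ u' 1 = 0 ∧
    (∀ r ∈ I, 0 < u r) ∧
    (∃ r ∈ I, ∃ s ∈ I, u r ≠ u s) ∧
    ∀ r ∈ Ioo (0 : ℝ) 1, -u'' r - ((N : ℝ) - 1) / r * u' r + u r = f (u r)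

lemma cast_mul_pow_sub_one {r : ℝ} (hr : r ≠ 0) (n : ℕ) :
    (n : ℝ) * r ^ (n - 1) = r ^ n * (n / r) := by
  cases n with
  | zero => simp
  | succ m => field_simp; simp [pow_succ]

lemma exists_isNeumannSol_of_isRadialEigenvalue {lam : ℝ} (h : IsRadialEigenvalue (n + 1) lam) :
    ∃ u v, IsNeumannSol n (fun r => lam * u r) u v ∧ ∃ r ∈ I, u r ≠ 0 := by
  obtain ⟨u, v, w, hu, hv, hw, hv0, hv1, hne, heq⟩ := h
  have hC1 : IsC1On u v := ⟨hu, hv⟩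
  refine ⟨u, v, ⟨hC1, hC1.continuousOn.const_mul lam, fun r hr => ?_, hv0, hv1⟩, hne⟩
  refine ((hasDerivAt_pow n r).mul (hw r hr)).congr_deriv ?_
  have hode := heq r hr
  push_cast at hode
  rw [cast_mul_pow_sub_one hr.1.ne']
  linear_combination -r ^ n * hode

lemma IsNeumannSol.exists_second_deriv (hs : IsNeumannSol n h u v) :
    ∃ w : ℝ → ℝ, (∀ r ∈ Ioo (0 : ℝ) 1, HasDerivAt v (w r) r) ∧
      ∀ r ∈ Ioo (0 : ℝ) 1, -w r - n / r * v r + u r = h r := by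
  refine ⟨fun r => u r - h r - n / r * v r, fun r hr => ?_, fun r _ => by ring⟩
  have hr0 : r ≠ 0 := hr.1.ne'
  have hpow : r ^ n ≠ 0 := pow_ne_zero n hr0
  have heq : v =ᶠ[𝓝 r] (fun x => x ^ n * v x) / fun x => x ^ n := by
    filter_upwards [isOpen_ne.mem_nhds hr0] with x hx
    rw [Pi.div_apply, mul_div_cancel_left₀ _ (pow_ne_zero n hx)]
  refine (((hs.hasDerivAt_flux r hr).div (hasDerivAt_pow n r) hpow).congr_of_eventuallyEq
    heq).congr_deriv ?_
  rw [cast_mul_pow_sub_one hr0]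
  field_simp

/-- Extension of a function on the half line by its value at `0`. -/
noncomputable def halfLineExtend (f : ℝ → ℝ) (hf : ContinuousOn f (Ici 0)) : C(ℝ, ℝ) where
  toFun s := f (max s 0)
  continuous_toFun := hf.comp_continuous (by fun_prop) fun s => le_max_right s 0

variable (hf : ContinuousOn f (Ici 0))

lemma halfLineExtend_of_nonneg {s : ℝ} (hs : 0 ≤ s) : halfLineExtend f hf s = f s := by
  simp [halfLineExtend, hs]

lemma monotone_halfLineExtend (hmono : MonotoneOn f (Ici 0)) : Monotone (halfLineExtend f hf) :=
  fun a b hab => hmono (le_max_right a 0) (le_max_right b 0) (max_le_max_right 0 hab)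

lemma halfLineExtend_nonneg (hmono : MonotoneOn f (Ici 0)) (hf0 : 0 ≤ f 0) (s : ℝ) :
    0 ≤ halfLineExtend f hf s :=
  hf0.trans (hmono self_mem_Ici (le_max_right s 0) (le_max_right s 0))

lemma hasDerivAt_halfLineExtend {c d : ℝ} (hc : 0 < c) (hd : HasDerivAt f d c) :
    HasDerivAt (halfLineExtend f hf) d c :=
  hd.congr_of_eventuallyEq <| by
    filter_upwards [Ioi_mem_nhds hc] with s hs using halfLineExtend_of_nonneg hf (le_of_lt hs)

lemma integral_halfLineExtend_le (hmono : MonotoneOn f (Ici 0)) (hf0 : 0 ≤ f 0) {R μ : ℝ}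
    (hμ : 0 < μ) (hAR : ∀ s, R ≤ s → μ * ∫ t in (0 : ℝ)..s, f t ≤ f s * s) {s : ℝ} (hs : 0 ≤ s) :
    ∫ t in (0 : ℝ)..s, halfLineExtend f hf t ≤
      halfLineExtend f hf s * s / μ + |∫ t in (0 : ℝ)..R, halfLineExtend f hf t| := by
  have hnonneg := halfLineExtend_nonneg hf hmono hf0
  rcases le_total R s with hRs | hsR
  · have heq : ∫ t in (0 : ℝ)..s, halfLineExtend f hf t = ∫ t in (0 : ℝ)..s, f t :=
      intervalIntegral.integral_congr fun t ht =>
        halfLineExtend_of_nonneg hf (uIcc_of_le hs ▸ ht).1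
    refine le_add_of_le_of_nonneg ?_ (abs_nonneg _)
    rw [heq, halfLineExtend_of_nonneg hf hs, le_div_iff₀' hμ]
    exact hAR s hRs
  · refine le_add_of_nonneg_of_le (div_nonneg (mul_nonneg (hnonneg s) hs) hμ.le) ?_
    exact (intervalIntegral.integral_mono_interval le_rfl hs hsR (.of_forall hnonneg)
      ((halfLineExtend f hf).continuous.intervalIntegrable 0 R)).trans (le_abs_self _)

lemma isSubcritical_halfLineExtend (hmono : MonotoneOn f (Ici 0)) {p C R μ : ℝ} (hp : 2 < p)
    (hcrit : (n - 1) * (p - 2) < 4) (hgrowth : ∀ s, 0 ≤ s → |f s| ≤ C * s ^ (p - 1)) (hμ : 2 < μ)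
    (hAR : ∀ s, R ≤ s → μ * ∫ t in (0 : ℝ)..s, f t ≤ f s * s) :
    IsSubcritical n (halfLineExtend f hf) fun s => ∫ t in (0 : ℝ)..s, halfLineExtend f hf t := by
  have hf0 : f 0 = 0 := by
    simpa [Real.zero_rpow (show p - 1 ≠ 0 by linarith)] using hgrowth 0 le_rfl
  exact {
    mono := monotone_halfLineExtend hf hmono
    nonneg := halfLineExtend_nonneg hf hmono hf0.ge
    hasDerivAt s := ((halfLineExtend f hf).continuous.integral_hasStrictDerivAt 0 s).hasDerivAt
    growth := ⟨p, C, hp, hcrit, fun s hs =>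
      (halfLineExtend_of_nonneg hf hs).trans_le ((le_abs_self _).trans (hgrowth s hs))⟩
    superquadratic := ⟨μ, _, hμ, fun s hs =>
      integral_halfLineExtend_le hf hmono hf0.ge (two_pos.trans hμ) hAR hs⟩ }

lemma sub_one_mul_sub_two_lt_four {p : ℝ} (hp : 2 < p)
    (hcrit : 3 ≤ n + 1 → p < 2 * (n + 1 : ℕ) / ((n + 1 : ℕ) - 2)) :
    ((n : ℝ) - 1) * (p - 2) < 4 := by
  rcases Nat.lt_or_ge n 2 with hn | hn
  · have hn1 : (n : ℝ) ≤ 1 := by exact_mod_cast Nat.lt_succ_iff.1 hn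
    linarith [mul_nonpos_of_nonpos_of_nonneg (sub_nonpos.2 hn1) (sub_pos.2 hp).le]
  · have hn2 : (2 : ℝ) ≤ n := by exact_mod_cast hn
    have hlt := hcrit (by omega)
    push_cast at hlt
    rw [lt_div_iff₀ (by linarith)] at hlt
    linarith

lemma isPosNonconstRadialSol_of_fixedPoint {w : C(I, ℝ)}
    (hnonneg : ∀ s, 0 ≤ halfLineExtend f hf s) (hw : picard n (halfLineExtend f hf) w = w)
    (hne : ∃ x y, w x ≠ w y)
    (hmono : MonotoneOn (lineExtend w) I ∨ AntitoneOn (lineExtend w) I) :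
    IsPosNonconstRadialSol (n + 1) f (lineExtend w) := by
  have hs := isNeumannSol_picard n (halfLineExtend f hf) w
  rw [hw] at hs
  have hne' : ∃ r ∈ I, ∃ s ∈ I, lineExtend w r ≠ lineExtend w s := by
    obtain ⟨x, y, hxy⟩ := hne
    exact ⟨x, x.2, y, y.2, by rwa [lineExtend_coe, lineExtend_coe]⟩
  have hpos : ∃ r ∈ I, 0 < lineExtend w r := by
    have hw0 := hs.nonneg fun r _ => hnonneg (lineExtend w r)
    obtain ⟨r, hr, s, hs, hrs⟩ := hne'
    rcases hrs.lt_or_gt with hlt | hlt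
    exacts [⟨s, hs, (hw0 r hr).trans_lt hlt⟩, ⟨r, hr, (hw0 s hs).trans_lt hlt⟩]
  have hpos : ∀ r ∈ I, 0 < lineExtend w r := hmono.elim
    (fun h => hs.pos_of_monotoneOn (fun _ _ => hnonneg _) h hpos)
    (fun h => hs.pos_of_antitoneOn (fun _ _ => hnonneg _) h hpos)
  obtain ⟨w'', hw'', hode⟩ := hs.exists_second_deriv
  refine ⟨_, w'', hs.hasDerivWithinAt, hs.continuousOn_deriv, hw'', hs.deriv_zero, hs.deriv_one,
    hpos, hne', fun r hr => ?_⟩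
  rw [Nat.cast_succ, add_sub_cancel_right, hode r hr,
    halfLineExtend_of_nonneg hf (hpos r (Ioo_subset_Icc_self hr)).le]

end RadialSolution

end RadialNeumann

open RadialNeumann in
theorem stmt_17_general {N : ℕ} (hN : 1 ≤ N) {p : ℝ} (hp2 : 2 < p)
    (hpcrit : 3 ≤ N → p < 2 * N / ((N : ℝ) - 2)) {f : ℝ → ℝ} (hf : ContinuousOn f (Ici 0))
    (hf_mono : MonotoneOn f (Ici 0)) {C : ℝ}
    (hf_growth : ∀ s : ℝ, 0 ≤ s → |f s| ≤ C * s ^ (p - 1)) {R μ : ℝ} (hμ : 2 < μ)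
    (hAR : ∀ s : ℝ, R ≤ s → μ * ∫ t in (0 : ℝ)..s, f t ≤ f s * s) {lam : ℝ} (hlam : 1 < lam)
    (hlam_eig : IsRadialEigenvalue N lam) {u0 d : ℝ} (hu0 : 0 < u0) (hfu0 : f u0 = u0)
    (hd : HasDerivAt f d u0) (hlamd : lam < d) :
    (∃ u, IsPosNonconstRadialSol N f u ∧ MonotoneOn u (Icc 0 1)) ∧
      ∃ u, IsPosNonconstRadialSol N f u ∧ AntitoneOn u (Icc 0 1) := by
  obtain ⟨n, rfl⟩ : ∃ n, N = n + 1 := ⟨N - 1, by omega⟩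
  obtain ⟨φ, φ', hφ, hφ0⟩ := exists_isNeumannSol_of_isRadialEigenvalue hlam_eig
  obtain ⟨ψ, χ, hψ⟩ := exists_isMonotoneTestFunction hlam hφ hφ0
  have hsub := isSubcritical_halfLineExtend hf hf_mono hp2
    (sub_one_mul_sub_two_lt_four hp2 hpcrit) hf_growth hμ hAR
  obtain ⟨⟨w, hw_mono, hw, hw_ne⟩, ⟨z, hz_anti, hz, hz_ne⟩⟩ :=
    hsub.exists_monotone_and_antitone_fixedPoint
      ((halfLineExtend_of_nonneg hf hu0.le).trans hfu0) (hasDerivAt_halfLineExtend hf hu0 hd)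
      hlam hlamd hψ
  have hw_mono := monotoneOn_lineExtend.2 hw_mono
  have hz_anti := antitoneOn_lineExtend.2 hz_anti
  exact ⟨⟨_, isPosNonconstRadialSol_of_fixedPoint hf hsub.nonneg hw hw_ne (.inl hw_mono), hw_mono⟩,
    ⟨_, isPosNonconstRadialSol_of_fixedPoint hf hsub.nonneg hz hz_ne (.inr hz_anti), hz_anti⟩⟩

/-- For `a ≡ 1`, a subcritical nonlinearity satisfying the Ambrosetti–Rabinowitz
condition and the spectral condition (f4) yields both a nonconstant nondecreasing
and a nonconstant nonincreasing positive radial solution of `-Δu + u = f(u)` with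
Neumann boundary conditions. -/
theorem stmt_17 (N : ℕ) (hN : 2 ≤ N) (p : ℝ) (hp2 : 2 < p)
    (hpcrit : 3 ≤ N → p < 2 * N / ((N : ℝ) - 2))
    (f : ℝ → ℝ)
    (hf_diff : ContDiffOn ℝ 1 f (Ici 0))
    (hf_mono : MonotoneOn f (Ici 0))
    (hf0 : f 0 = 0)
    (hf'0 : derivWithin f (Ici 0) 0 = 0)
    (C : ℝ) (hC : 0 < C)
    (hf_growth : ∀ s : ℝ, 0 ≤ s → |f s| ≤ C * s ^ (p - 1))
    (R0 μ : ℝ) (hR0 : 0 < R0) (hμ : 2 < μ)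
    (hAR : ∀ s : ℝ, R0 ≤ s → μ * ∫ t in (0:ℝ)..s, f t ≤ f s * s)
    (lam2 : ℝ) (hlam2_gt : 1 < lam2)
    (hlam2_eig : IsRadialEigenvalue N lam2)
    (hlam2_min : ∀ lam ∈ Ioo (1:ℝ) lam2, ¬ IsRadialEigenvalue N lam)
    (u0 : ℝ) (hu0 : 0 < u0) (hfu0 : f u0 = u0)
    (hf'u0 : lam2 < derivWithin f (Ici 0) u0) :
    (∃ u u' u'' : ℝ → ℝ,
      (∀ r ∈ Icc (0:ℝ) 1, HasDerivWithinAt u (u' r) (Icc 0 1) r) ∧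
      ContinuousOn u' (Icc 0 1) ∧
      (∀ r ∈ Ioo (0:ℝ) 1, HasDerivAt u' (u'' r) r) ∧
      u' 0 = 0 ∧ u' 1 = 0 ∧
      (∀ r ∈ Icc (0:ℝ) 1, 0 < u r) ∧
      MonotoneOn u (Icc 0 1) ∧
      (∃ r ∈ Icc (0:ℝ) 1, ∃ s ∈ Icc (0:ℝ) 1, u r ≠ u s) ∧
      (∀ r ∈ Ioo (0:ℝ) 1,
        -u'' r - ((N : ℝ) - 1) / r * u' r + u r = f (u r))) ∧
    (∃ u u' u'' : ℝ → ℝ,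
      (∀ r ∈ Icc (0:ℝ) 1, HasDerivWithinAt u (u' r) (Icc 0 1) r) ∧
      ContinuousOn u' (Icc 0 1) ∧
      (∀ r ∈ Ioo (0:ℝ) 1, HasDerivAt u' (u'' r) r) ∧
      u' 0 = 0 ∧ u' 1 = 0 ∧
      (∀ r ∈ Icc (0:ℝ) 1, 0 < u r) ∧
      AntitoneOn u (Icc 0 1) ∧
      (∃ r ∈ Icc (0:ℝ) 1, ∃ s ∈ Icc (0:ℝ) 1, u r ≠ u s) ∧
      (∀ r ∈ Ioo (0:ℝ) 1,
        -u'' r - ((N : ℝ) - 1) / r * u' r + u r = f (u r))) := by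
  have hd : HasDerivAt f (derivWithin f (Ici 0) u0) u0 :=
    (hf_diff.differentiableOn one_ne_zero u0 hu0.le).hasDerivWithinAt.hasDerivAt (Ici_mem_nhds hu0)
  obtain ⟨⟨u, ⟨u', u'', hu, hu', hu'', h0, h1, hpos, hne, hode⟩, hmono⟩,
      ⟨w, ⟨w', w'', hw, hw', hw'', k0, k1, kpos, kne, kode⟩, hanti⟩⟩ :=
    stmt_17_general (by omega) hp2 hpcrit hf_diff.continuousOn hf_mono hf_growth hμ hAR
      hlam2_gt hlam2_eig hu0 hfu0 hd hf'u0
  exact ⟨⟨u, u', u'', hu, hu', hu'', h0, h1, hpos, hmono, hne, hode⟩,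
    ⟨w, w', w'', hw, hw', hw'', k0, k1, kpos, hanti, kne, kode⟩⟩
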